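/- arXiv:2012.06358 — 3 statements merged into one kernel-verified Lean document; each statement's English description precedes it below -/
import Mathlib

section
/- Fix integers i, j ≥ 1. Then, as n → ∞, the real number #{f ∈ 𝔐_n : T_1(f) = i, T_2(f) = j} / n^{n−2} converges to e^{−2}·[ (i+j−2)/(i+j−1)! + (i+j−1)/(i!·j!) − (i+j−1)/(i+j)! ]. -/
/-!
A minimal factorization of an `(m + 2)`-cycle is decomposed by removing its last transposition
`(a b)`. This cuts the cycle into two cycles of sizes `p + 1` and `q + 1` with `p + q = m`, and,
because the number of factors is minimal, none of the remaining transpositions joins the two cycles: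
the remaining factors are a shuffle of minimal factorizations of the two cycles (`wfact_sumCongr`,
`cyc_succ`). Here minimality is controlled by counting cycles, since multiplying by a transposition
creates at most one new cycle.

Give each appearance of the first point the weight `x` and each appearance of the second point the
weight `y`. Extracting coefficients turns the decomposition into recurrences with binomial
coefficients for

* `hNum`, the number of minimal factorizations,
* `aNum i`, the number of those in which the first point appears `i` times,
* `gNum i j`, the number of those in which the first two points appear `i` and `j` times.

These recurrences are differential equations for the exponential generating functions `H`, `A i`,
`G i j`, indexed by the number of factors. With `T = X * H` they read `(1 - T) * T' = H`,
`(A (i + 1))' = A i * T'` and, for `i, j ≥ 0`,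
`(G (i + 1) (j + 1) * H)' = (δ_{i,0} * A j + G i (j + 1) * H + A j * A (i + 1)) * T'`.
Hence `A i = T ^ i / i!` (`aSer_eq`) and, for `i, j ≥ 1` (`gSer_eq`),
`G i j = X * ((1 / (i! j!) - 1 / (i + j)!) * T ^ (i + j - 1) + T ^ (i + j - 2) / (i + j - 1)!)`.

The relation `X * T' * (1 - T) = T` yields a recurrence in `r` for the coefficients of `T ^ r`, so
that the coefficient of index `n ≥ 1` is `r * n ^ (n - 1) / n! * ∏ s < r, (1 - s / n)`. Multiplied
by `(n + 1)!` and divided by `(n + 2) ^ n`, it tends to `r * exp (-2)`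
(`tendsto_coeff_tSer_pow`), which gives the limit.
-/

open Filter

/- `τ` is a minimal factorization: every entry is a transposition and the composition
`τ_{k} ∘ ⋯ ∘ τ_1` (rightmost applied first) is the cycle `(1 2 … m)`, i.e. `finRotate m`. -/
def IsMinFact {k m : ℕ} (τ : Fin k → Equiv.Perm (Fin m)) : Prop :=
  (∀ ℓ, (τ ℓ).IsSwap) ∧ (List.ofFn τ).reverse.prod = finRotate m

/- `T_v`: the number of transpositions of `τ` in which `v` appears. -/
def Tcount {k m : ℕ} (τ : Fin k → Equiv.Perm (Fin m)) (v : Fin m) : ℕ :=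
  (Finset.univ.filter fun ℓ => τ ℓ v ≠ v).card

set_option linter.unusedSectionVars false

section proof
open Equiv

/-! ### Cycles of permutations and weighted factorizations -/

/-- The number of cycles of a permutation, fixed points included. -/
noncomputable def orb {α : Type*} (π : Perm α) : ℕ := Nat.card (Quotient (Perm.SameCycle.setoid π))

/-- The weighted number of factorizations of `π` into `k` swaps `swap a b`, a factor `swap a b`
having weight `w a b`. The pairs `(a, b)` are ordered and `a = b` is allowed; the weights `wt` below
compensate for both. The recursion removes the leftmost factor. -/
noncomputable def wfact {α R : Type*} [Fintype α] [DecidableEq α] [CommRing R] (w : α → α → R) :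
    ℕ → Perm α → R
  | 0, π => if π = 1 then 1 else 0
  | k + 1, π => ∑ a, ∑ b, w a b * wfact w k (swap a b * π)

section orbits
variable {α β : Type*} [Fintype α] [DecidableEq α] [Fintype β] [DecidableEq β]

lemma orb_le_card (π : Perm α) : orb π ≤ Fintype.card α := by
  rw [← Nat.card_eq_fintype_card]
  exact Nat.card_le_card_of_surjective _ (Quotient.mk_surjective)

lemma orb_one : orb (1 : Perm α) = Fintype.card α := by
  rw [← Nat.card_eq_fintype_card]
  refine (Nat.card_congr (Equiv.ofBijective (Quotient.mk _) ⟨?_, Quotient.mk_surjective⟩)).symm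
  intro x y h
  have h : Perm.SameCycle (1 : Perm α) x y := Quotient.exact h
  simpa using h

/-- If every step of `π` stays in a cycle of `ρ`, then each cycle of `π` is contained in a cycle
of `ρ`. -/
lemma sameCycle_of_step {π ρ : Perm α} (h : ∀ x, ρ.SameCycle x (π x)) {x y : α}
    (hxy : π.SameCycle x y) : ρ.SameCycle x y := by
  obtain ⟨n, -, -, rfl⟩ := hxy.exists_pow_eq''
  clear hxy
  induction n with
  | zero => exact Perm.SameCycle.refl _ _
  | succ n ih => rw [pow_succ', Perm.mul_apply]; exact ih.trans (h _)

lemma sameCycle_swap_mul {π : Perm α} {a b x y : α} (hxy : (swap a b * π).SameCycle x y)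
    (hab : π.SameCycle a b) : π.SameCycle x y := by
  refine sameCycle_of_step (fun x => ?_) hxy
  have hx : π.SameCycle x (π x) := ⟨1, by simp⟩
  rw [Perm.mul_apply, swap_apply_def]
  split_ifs with h1 h2
  · exact (h1 ▸ hx).trans hab
  · exact (h2 ▸ hx).trans hab.symm
  · exact hx

/-- Multiplying by a swap of two points in different cycles merges these cycles. -/
lemma sameCycle_swap_mul_of_not {π : Perm α} {a b : α} (h : ¬ π.SameCycle a b) :
    (swap a b * π).SameCycle a b := by
  by_contra hc
  have key : ∀ n : ℕ, ((swap a b * π) ^ n) a = (π ^ n) a := by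
    intro n
    induction n with
    | zero => simp
    | succ n ih =>
      have e : ((swap a b * π) ^ (n+1)) a = swap a b ((π ^ (n+1)) a) := by
        rw [pow_succ', Perm.mul_apply, ih, pow_succ', Perm.mul_apply, Perm.mul_apply]
      rw [e]
      apply swap_apply_of_ne_of_ne
      · intro h1
        apply hc
        refine ⟨(n+1 : ℕ), ?_⟩
        rw [zpow_natCast, e, h1, swap_apply_left]
      · intro h1
        exact h ⟨(n+1 : ℕ), by rw [zpow_natCast, h1]⟩
  have h1 := key (orderOf π)
  have ho : orderOf π = (orderOf π - 1) + 1 := by have := orderOf_pos π; omega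
  apply hc
  refine ⟨(orderOf π : ℕ), ?_⟩
  have k2 := key (orderOf π - 1)
  rw [zpow_natCast, ho, pow_succ', Perm.mul_apply, k2, Perm.mul_apply, ← Perm.mul_apply π, ← pow_succ', ← ho,
    pow_orderOf_eq_one, Perm.one_apply, swap_apply_left]

lemma orb_swap_mul_le_of_sameCycle {π : Perm α} {a b : α} (hab : (swap a b * π).SameCycle a b) :
    orb (swap a b * π) ≤ orb π := by
  refine Nat.card_le_card_of_surjective
    (Quotient.map' (s₁ := Perm.SameCycle.setoid π)
      (s₂ := Perm.SameCycle.setoid (swap a b * π)) id ?_) ?_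
  · intro x y hxy
    have : (swap a b * (swap a b * π)).SameCycle x y := by
      rw [← mul_assoc, swap_mul_self, one_mul]; exact hxy
    exact sameCycle_swap_mul this hab
  · intro q
    induction q using Quotient.inductionOn with
    | h x => exact ⟨Quotient.mk _ x, rfl⟩

/-- Multiplying by a swap creates at most one new cycle. -/
lemma orb_swap_mul_le (π : Perm α) (a b : α) : orb (swap a b * π) ≤ orb π + 1 := by
  classical
  by_cases hab : (swap a b * π).SameCycle a b
  swap
  · set ρ := swap a b * π with hρ
    have hπ : π = swap a b * ρ := by rw [hρ, ← mul_assoc, swap_mul_self, one_mul]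
    let f : Quotient (Perm.SameCycle.setoid ρ) → Option (Quotient (Perm.SameCycle.setoid π)) :=
      fun q => if q = Quotient.mk _ b then none else some (Quotient.mk _ q.out)
    have hf : Function.Injective f := by
      -- away from the cycles of `a` and `b`, the cycles of `π` and `ρ` agree
      have key : ∀ x y, π.SameCycle x y → ρ.SameCycle x y ∨
          ((ρ.SameCycle a x ∨ ρ.SameCycle b x) ∧ (ρ.SameCycle a y ∨ ρ.SameCycle b y)) := by
        intro x y hxy
        obtain ⟨n, -, -, rfl⟩ := hxy.exists_pow_eq''
        clear hxy
        induction n with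
        | zero => left; exact Perm.SameCycle.refl _ _
        | succ n ih =>
          set z := (π ^ n) x with hz
          have e : (π ^ (n+1)) x = swap a b (ρ z) := by
            rw [pow_succ', Perm.mul_apply, ← hz]; conv_lhs => rw [hπ]
            rfl
          rw [e]
          have hs : ρ.SameCycle z (ρ z) := ⟨1, by simp⟩
          rw [swap_apply_def]
          split_ifs with h1 h2
          · right
            rw [h1] at hs
            refine ⟨?_, Or.inr (Perm.SameCycle.refl _ _)⟩
            rcases ih with ih | ih
            · exact Or.inl (ih.trans hs).symm
            · exact ih.1
          · right
            rw [h2] at hs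
            refine ⟨?_, Or.inl (Perm.SameCycle.refl _ _)⟩
            rcases ih with ih | ih
            · exact Or.inr (ih.trans hs).symm
            · exact ih.1
          · rcases ih with ih | ih
            · exact Or.inl (ih.trans hs)
            · exact Or.inr ⟨ih.1, ih.2.imp (fun h => h.trans hs) (fun h => h.trans hs)⟩
      intro q₁ q₂ h
      have hb : ∀ q : Quotient (Perm.SameCycle.setoid ρ), q ≠ Quotient.mk _ b →
          ¬ ρ.SameCycle b q.out := by
        intro q hq hs
        exact hq (by rw [← Quotient.out_eq q]; exact Quotient.sound hs.symm)
      by_cases h1 : q₁ = Quotient.mk _ b <;> by_cases h2 : q₂ = Quotient.mk _ b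
      · rw [h1, h2]
      · simp [f, h1, h2] at h
      · simp [f, h1, h2] at h
      · simp only [f, h1, h2, if_false, Option.some.injEq] at h
        have h : π.SameCycle q₁.out q₂.out := Quotient.exact h
        rw [← Quotient.out_eq q₁, ← Quotient.out_eq q₂]
        apply Quotient.sound
        rcases key _ _ h with h | ⟨h3, h4⟩
        · exact h
        · exact (h3.resolve_right (hb _ h1)).symm.trans (h4.resolve_right (hb _ h2))
    have := Nat.card_le_card_of_injective f hf
    rwa [Finite.card_option] at this
  · exact (orb_swap_mul_le_of_sameCycle hab).trans (Nat.le_succ _)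

lemma orb_sumCongr_le (σ : Perm α) (ρ : Perm β) :
    orb (Perm.sumCongr σ ρ) ≤ orb σ + orb ρ := by
  unfold orb
  rw [← Nat.card_sum]
  refine Nat.card_le_card_of_surjective (Sum.elim
    (Quotient.map' (s₁ := Perm.SameCycle.setoid σ)
      (s₂ := Perm.SameCycle.setoid (Perm.sumCongr σ ρ)) Sum.inl ?_)
    (Quotient.map' (s₁ := Perm.SameCycle.setoid ρ)
      (s₂ := Perm.SameCycle.setoid (Perm.sumCongr σ ρ)) Sum.inr ?_)) ?_
  · intro x y hxy
    obtain ⟨n, -, -, rfl⟩ := Perm.SameCycle.exists_pow_eq'' hxy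
    refine ⟨(n : ℤ), ?_⟩
    rw [zpow_natCast]
    clear hxy
    induction n with
    | zero => rfl
    | succ n ih => rw [pow_succ', Perm.mul_apply, ih, pow_succ']; rfl
  · intro x y hxy
    obtain ⟨n, -, -, rfl⟩ := Perm.SameCycle.exists_pow_eq'' hxy
    refine ⟨(n : ℤ), ?_⟩
    rw [zpow_natCast]
    clear hxy
    induction n with
    | zero => rfl
    | succ n ih => rw [pow_succ', Perm.mul_apply, ih, pow_succ']; rfl
  · intro q
    induction q using Quotient.inductionOn with
    | h x =>
      rcases x with x | x
      · exact ⟨Sum.inl (Quotient.mk _ x), rfl⟩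
      · exact ⟨Sum.inr (Quotient.mk _ x), rfl⟩

lemma not_sameCycle_sumCongr (σ : Perm α) (ρ : Perm β) (a : α) (b : β) :
    ¬ (Perm.sumCongr σ ρ).SameCycle (Sum.inl a) (Sum.inr b) := by
  intro h
  obtain ⟨n, -, -, h⟩ := Perm.SameCycle.exists_pow_eq'' h
  have : ∀ n : ℕ, ((Perm.sumCongr σ ρ ^ n) (Sum.inl a)).isLeft := by
    intro n
    induction n with
    | zero => rfl
    | succ n ih =>
      rw [pow_succ', Perm.mul_apply]
      obtain ⟨y, hy⟩ := Sum.isLeft_iff.1 ih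
      rw [hy]; rfl
  have := this n
  rw [h] at this
  simp at this

variable {R : Type*} [CommRing R]

/-- A permutation with `c` cycles is not a product of fewer than `card α - c` swaps. -/
lemma wfact_eq_zero (w : α → α → R) (k : ℕ) (π : Perm α) (h : k + orb π < Fintype.card α) :
    wfact w k π = 0 := by
  induction k generalizing π with
  | zero =>
    rw [wfact, if_neg]
    rintro rfl
    rw [orb_one] at h
    omega
  | succ k ih =>
    rw [wfact]
    refine Finset.sum_eq_zero fun a _ => Finset.sum_eq_zero fun b _ => ?_
    rw [ih, mul_zero]
    have := orb_swap_mul_le π a b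
    omega

/-- In a factorization of a disjoint union of permutations of minimal length, no swap can join
the two parts. -/
lemma wfact_cross_eq_zero (w : α ⊕ β → α ⊕ β → R) (k : ℕ) (σ : Perm α) (ρ : Perm β)
    (x y : α ⊕ β) (hxy : ¬ (Perm.sumCongr σ ρ).SameCycle x y)
    (h : k + orb σ + orb ρ < Fintype.card α + Fintype.card β) :
    wfact w k (swap x y * Perm.sumCongr σ ρ) = 0 := by
  apply wfact_eq_zero
  have h1 := orb_swap_mul_le_of_sameCycle (sameCycle_swap_mul_of_not hxy)
  have h2 := orb_sumCongr_le σ ρ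
  rw [Fintype.card_sum]
  omega

/-- Factorizations of minimal length of a disjoint union of two permutations are shuffles of
factorizations of the two parts. -/
lemma wfact_sumCongr (w : α ⊕ β → α ⊕ β → R) (p q : ℕ) (σ : Perm α) (ρ : Perm β)
    (hp : p + orb σ ≤ Fintype.card α) (hq : q + orb ρ ≤ Fintype.card β) :
    wfact w (p + q) (Perm.sumCongr σ ρ) =
      ((p + q).choose p : R) * (wfact (fun a b => w (Sum.inl a) (Sum.inl b)) p σ *
        wfact (fun a b => w (Sum.inr a) (Sum.inr b)) q ρ) := by
  obtain ⟨k, hk⟩ : ∃ k, k = p + q := ⟨_, rfl⟩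
  induction k generalizing p q σ ρ with
  | zero =>
    obtain rfl : p = 0 := by omega
    obtain rfl : q = 0 := by omega
    have e : Perm.sumCongr σ ρ = 1 ↔ σ = 1 ∧ ρ = 1 := by
      rw [← Perm.sumCongr_one]
      constructor
      · intro h
        constructor <;> ext x
        · have := congrArg (fun f => f (Sum.inl x)) h
          simpa using this
        · have := congrArg (fun f => f (Sum.inr x)) h
          simpa using this
      · rintro ⟨rfl, rfl⟩; rfl
    simp only [wfact, e]
    by_cases h1 : σ = 1 <;> by_cases h2 : ρ = 1 <;> simp [h1, h2]
  | succ k ih =>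
    have hL : ∀ a b : α, wfact w k (swap (Sum.inl a) (Sum.inl b) * Perm.sumCongr σ ρ) =
        wfact w k (Perm.sumCongr (swap a b * σ) ρ) := by
      intro a b
      rw [← Perm.sumCongr_swap_one, Perm.sumCongr_mul, one_mul]
    have hR : ∀ a b : β, wfact w k (swap (Sum.inr a) (Sum.inr b) * Perm.sumCongr σ ρ) =
        wfact w k (Perm.sumCongr σ (swap a b * ρ)) := by
      intro a b
      rw [← Perm.sumCongr_one_swap, Perm.sumCongr_mul, one_mul]
    have hLR : ∀ a b, wfact w k (swap (Sum.inl a) (Sum.inr b) * Perm.sumCongr σ ρ) = 0 :=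
      fun a b => wfact_cross_eq_zero w k σ ρ _ _ (not_sameCycle_sumCongr σ ρ a b) (by omega)
    have hRL : ∀ a b, wfact w k (swap (Sum.inr b) (Sum.inl a) * Perm.sumCongr σ ρ) = 0 :=
      fun a b => by rw [swap_comm]; exact hLR a b
    -- contribution of the swaps inside `α`
    have sL : ∑ a, ∑ b, w (Sum.inl a) (Sum.inl b) * wfact w k (Perm.sumCongr (swap a b * σ) ρ) =
        (if p = 0 then 0 else (k.choose (p - 1) : R)) *
          (wfact (fun a b => w (Sum.inl a) (Sum.inl b)) p σ *
          wfact (fun a b => w (Sum.inr a) (Sum.inr b)) q ρ) := by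
      rcases p with _ | p
      · rw [if_pos rfl, zero_mul]
        refine Finset.sum_eq_zero fun a _ => Finset.sum_eq_zero fun b _ => ?_
        rw [wfact_eq_zero, mul_zero]
        have := orb_sumCongr_le (swap a b * σ) ρ
        have := orb_le_card (swap a b * σ)
        rw [Fintype.card_sum]
        omega
      · obtain rfl : k = p + q := by omega
        rw [if_neg (by omega), wfact, Finset.sum_mul, Finset.mul_sum]
        refine Finset.sum_congr rfl fun a _ => ?_
        rw [Finset.sum_mul, Finset.mul_sum]
        refine Finset.sum_congr rfl fun b _ => ?_
        rw [ih p q _ ρ (by have := orb_swap_mul_le σ a b; omega) hq rfl, Nat.add_sub_cancel]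
        ring
    have sR : ∑ a, ∑ b, w (Sum.inr a) (Sum.inr b) * wfact w k (Perm.sumCongr σ (swap a b * ρ)) =
        (if q = 0 then 0 else (k.choose p : R)) *
          (wfact (fun a b => w (Sum.inl a) (Sum.inl b)) p σ *
          wfact (fun a b => w (Sum.inr a) (Sum.inr b)) q ρ) := by
      rcases q with _ | q
      · rw [if_pos rfl, zero_mul]
        refine Finset.sum_eq_zero fun a _ => Finset.sum_eq_zero fun b _ => ?_
        rw [wfact_eq_zero, mul_zero]
        have := orb_sumCongr_le σ (swap a b * ρ)
        have := orb_le_card (swap a b * ρ)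
        rw [Fintype.card_sum]
        omega
      · obtain rfl : k = p + q := by omega
        rw [if_neg (by omega), wfact, Finset.mul_sum, Finset.mul_sum]
        refine Finset.sum_congr rfl fun a _ => ?_
        rw [Finset.mul_sum, Finset.mul_sum]
        refine Finset.sum_congr rfl fun b _ => ?_
        rw [ih p q σ _ hp (by have := orb_swap_mul_le ρ a b; omega) rfl]
        ring
    rw [← hk, wfact]
    simp only [Fintype.sum_sum_type, hL, hR, hLR, hRL, mul_zero, Finset.sum_const_zero,
      add_zero, zero_add, Finset.sum_add_distrib]
    rw [sL, sR, ← add_mul]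
    congr 1
    rcases p with _ | p
    · rw [if_pos rfl, if_neg (by omega)]; simp
    · rcases q with _ | q
      · obtain rfl : k = p := by omega
        simp
      · rw [if_neg (by omega), if_neg (by omega), Nat.choose_succ_succ]
        push_cast
        simp

/-- Weighted factorization numbers are invariant under relabelling. -/
lemma wfact_congr (w : β → β → R) (e : α ≃ β) (k : ℕ) (π : Perm α) (ρ : Perm β)
    (h : ∀ x, e (π x) = ρ (e x)) :
    wfact w k ρ = wfact (fun a b => w (e a) (e b)) k π := by
  induction k generalizing π ρ with
  | zero =>
    have : ρ = 1 ↔ π = 1 := by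
      constructor
      · rintro rfl
        ext x
        exact e.injective (by simpa using h x)
      · rintro rfl
        ext x
        obtain ⟨y, rfl⟩ := e.surjective x
        simpa using (h y).symm
    simp only [wfact, this]
  | succ k ih =>
    simp only [wfact]
    rw [← e.sum_comp]
    refine Finset.sum_congr rfl fun a _ => ?_
    rw [← e.sum_comp]
    refine Finset.sum_congr rfl fun b _ => ?_
    congr 1
    apply ih
    intro x
    rw [Perm.mul_apply, Perm.mul_apply, ← h, e.injective.swap_apply]

lemma map_wfact {S : Type*} [CommRing S] (φ : R →+* S) (w : α → α → R) (k : ℕ) (π : Perm α) :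
    φ (wfact w k π) = wfact (fun a b => φ (w a b)) k π := by
  induction k generalizing π with
  | zero => simp only [wfact]; split_ifs <;> simp
  | succ k ih => simp only [wfact, map_sum, map_mul, ih]

end orbits

/-! ### Splitting a cycle -/

section cycles
variable {R : Type*} [CommRing R] [Algebra ℚ R]

/-- The weight of an ordered pair of points when the point `a` has weight `g a`. The factor `1 / 2`
makes the two ordered pairs of a transposition contribute its weight `g a * g b` in total. -/
noncomputable def wt (g : ℕ → R) (n : ℕ) : Fin n → Fin n → R := fun a b =>
  if a = b then 0 else algebraMap ℚ R (1 / 2) * (g a * g b)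

/-- The generating function of the minimal factorizations of the `(m + 1)`-cycle in which each
occurrence of the point `a` in a transposition has weight `g a`. -/
noncomputable def cyc (g : ℕ → R) (m : ℕ) : R := wfact (wt g (m + 1)) m (finRotate (m + 1))

lemma cyc_congr {g g' : ℕ → R} {m : ℕ} (h : ∀ j ≤ m, g j = g' j) : cyc g m = cyc g' m := by
  unfold cyc
  congr 1
  funext a b
  simp only [wt]
  rw [h a (by omega), h b (by omega)]

lemma map_cyc {S : Type*} [CommRing S] [Algebra ℚ S] (φ : R →+* S) (g : ℕ → R) (m : ℕ) :
    φ (cyc g m) = cyc (fun j => φ (g j)) m := by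
  unfold cyc
  rw [map_wfact]
  congr 1
  funext a b
  simp only [wt]
  split_ifs
  · simp
  · rw [map_mul, map_mul, RingHom.map_rat_algebraMap]

lemma orb_finRotate (m : ℕ) : orb (finRotate (m + 1)) ≤ 1 := by
  rw [orb, Finite.card_le_one_iff_subsingleton]
  refine ⟨fun x y => ?_⟩
  have h0 : ∀ x : Fin (m + 1), (finRotate (m + 1)).SameCycle 0 x := by
    intro x
    refine ⟨((x : ℕ) : ℤ), ?_⟩
    rw [zpow_natCast]
    obtain ⟨x, hx⟩ := x
    induction x with
    | zero => rfl
    | succ x ih =>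
      rw [pow_succ', Perm.mul_apply, ih (by omega)]
      exact finRotate_of_lt (by omega)
  induction x using Quotient.inductionOn with
  | h x =>
    induction y using Quotient.inductionOn with
    | h y => exact Quotient.sound ((h0 x).symm.trans (h0 y))

/-- The weight sequence `g` with its terms of index `a, …, a + k - 1` removed. -/
def skip (g : ℕ → R) (a k : ℕ) : ℕ → R := fun j => if j < a then g j else g (j + k)

/-- The decomposition of `Fin (p + q + 2)` into the interval `[a, a + p]` and its complement, each
labelled in increasing order. -/
def splitFun (a p q : ℕ) (haq : a ≤ q) : Fin (p + 1) ⊕ Fin (q + 1) → Fin (p + q + 1 + 1)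
  | Sum.inl i => ⟨a + i, by omega⟩
  | Sum.inr j => ⟨if (j : ℕ) < a then j else j + (p + 1), by split_ifs <;> omega⟩

lemma splitFun_bijective (a p q : ℕ) (haq : a ≤ q) : Function.Bijective (splitFun a p q haq) := by
  rw [Fintype.bijective_iff_injective_and_card]
  constructor
  · rintro (x | x) (y | y) h <;> simp only [splitFun, Fin.mk.injEq] at h
    · congr 1; ext; omega
    · exfalso; split_ifs at h <;> omega
    · exfalso; split_ifs at h <;> omega
    · congr 1; ext; split_ifs at h <;> omega
  · simp; omega

lemma val_finRotate (m : ℕ) (x : Fin (m + 1)) :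
    (finRotate (m + 1) x : ℕ) = if (x : ℕ) = m then 0 else (x : ℕ) + 1 := by
  split_ifs with h
  · obtain rfl : x = Fin.last m := Fin.ext h
    rw [finRotate_last]; rfl
  · have : (x : ℕ) < m := by omega
    exact congrArg Fin.val (finRotate_of_lt (k := x) this)

/-- Multiplying a cycle by the swap of `a` and `a + p + 1` cuts it into a cycle on `[a, a + p]` and a
cycle on the remaining points. -/
lemma wfact_split (g : ℕ → R) (a p q : ℕ) (haq : a ≤ q) (x y : Fin (p + q + 1 + 1))
    (hx : (x : ℕ) = a) (hy : (y : ℕ) = a + p + 1) :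
    wfact (wt g (p + q + 1 + 1)) (p + q) (swap x y * finRotate (p + q + 1 + 1)) =
      ((p + q).choose p : R) * (cyc (fun j => g (a + j)) p * cyc (skip g a (p + 1)) q) := by
  rw [wfact_congr _ (Equiv.ofBijective _ (splitFun_bijective a p q haq)) _
    (Perm.sumCongr (finRotate (p + 1)) (finRotate (q + 1))), wfact_sumCongr]
  · congr 2
    · unfold cyc
      congr 1
      funext i j
      simp only [wt, Equiv.ofBijective_apply, splitFun, Nat.add_left_cancel_iff,
        Fin.ext_iff]
    · unfold cyc
      congr 1
      funext i j
      have : (Equiv.ofBijective _ (splitFun_bijective a p q haq)) (Sum.inr i) =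
        (Equiv.ofBijective _ (splitFun_bijective a p q haq)) (Sum.inr j) ↔ i = j := by
        rw [EmbeddingLike.apply_eq_iff_eq]; simp
      simp only [wt, this]
      simp only [Equiv.ofBijective_apply, splitFun, skip]
      split_ifs <;> rfl
  · have := orb_finRotate p
    simp only [Fintype.card_fin]; omega
  · have := orb_finRotate q
    simp only [Fintype.card_fin]; omega
  · intro z
    rw [Perm.mul_apply, swap_apply_def]
    rcases z with z | z
    · have h1 := val_finRotate p z
      have h2 := val_finRotate (p + q + 1) (splitFun a p q haq (Sum.inl z))
      simp only [splitFun] at h2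
      simp only [Equiv.ofBijective_apply, Perm.sumCongr_apply, Sum.map_inl, Fin.ext_iff,
        splitFun, hx, apply_ite Fin.val, hy, h1, h2]
      grind
    · have h1 := val_finRotate q z
      have h2 := val_finRotate (p + q + 1) (splitFun a p q haq (Sum.inr z))
      simp only [splitFun] at h2
      simp only [Equiv.ofBijective_apply, Perm.sumCongr_apply, Sum.map_inr, Fin.ext_iff,
        splitFun, hx, apply_ite Fin.val, hy, h1, h2]
      grind

/-- A symmetric sum over ordered pairs, halved, is a sum over pairs `a < b`. -/
lemma sum_pairs {n : ℕ} (f : Fin n → Fin n → R) (hf : ∀ a b, f a b = f b a) :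
    ∑ a, ∑ b, (if a = b then 0 else algebraMap ℚ R (1 / 2) * f a b) =
      ∑ x ∈ (Finset.univ : Finset (Fin n × Fin n)).filter (fun x => x.1 < x.2), f x.1 x.2 := by
  have h1 : ∀ a b : Fin n, (if a = b then 0 else algebraMap ℚ R (1 / 2) * f a b) =
      algebraMap ℚ R (1 / 2) * (if a < b then f a b else 0) +
        algebraMap ℚ R (1 / 2) * (if b < a then f b a else 0) := by
    intro a b
    rcases lt_trichotomy a b with h | h | h
    · simp [h, h.ne, not_lt.2 h.le]
    · simp [h]
    · simp [h, h.ne', not_lt.2 h.le, hf a b]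
  have h2 : algebraMap ℚ R (1 / 2) + algebraMap ℚ R (1 / 2) = 1 := by
    rw [← map_add]; norm_num
  simp only [h1, Finset.sum_add_distrib]
  rw [Finset.sum_comm (f := fun a b => algebraMap ℚ R (1 / 2) * (if b < a then f b a else 0))]
  simp only [← Finset.mul_sum]
  rw [← add_mul, h2, one_mul, Finset.sum_filter, Fintype.sum_prod_type]

/-- The recurrence obtained by removing the last transposition `(a, a + p + 1)` of a minimal
factorization; `x = (p, q)` records the sizes of the two resulting cycles, minus one. -/
lemma cyc_succ (g : ℕ → R) (m : ℕ) :
    cyc g (m + 1) = ∑ x ∈ Finset.HasAntidiagonal.antidiagonal m, (m.choose x.1 : R) *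
      ∑ a ∈ Finset.range (x.2 + 1), g a * g (a + x.1 + 1) *
        (cyc (fun j => g (a + j)) x.1 * cyc (skip g a (x.1 + 1)) x.2) := by
  have e : cyc g (m + 1) = ∑ a : Fin (m + 1 + 1), ∑ b : Fin (m + 1 + 1), (if a = b then 0 else
      algebraMap ℚ R (1 / 2) * ((g a * g b) *
        wfact (wt g (m + 1 + 1)) m (swap a b * finRotate (m + 1 + 1)))) := by
    rw [cyc, wfact]
    refine Finset.sum_congr rfl fun a _ => Finset.sum_congr rfl fun b _ => ?_
    rw [wt]
    split_ifs
    · rw [zero_mul]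
    · ring
  rw [e, sum_pairs _ (fun a b => by rw [swap_comm, mul_comm (g a)])]
  simp only [Finset.mul_sum]
  rw [Finset.sum_sigma']
  refine Finset.sum_bij (fun x _ => ⟨((x.2 : ℕ) - x.1 - 1, m - ((x.2 : ℕ) - x.1 - 1)), x.1⟩) ?_ ?_ ?_ ?_
  · rintro ⟨a, b⟩ h
    simp only [Finset.mem_filter, Finset.mem_univ, true_and, Fin.lt_def] at h
    simp only [Finset.mem_sigma, Finset.HasAntidiagonal.mem_antidiagonal, Finset.mem_range]
    omega
  · rintro ⟨a, b⟩ h ⟨c, d⟩ h'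
    simp only [Finset.mem_filter, Finset.mem_univ, true_and, Fin.lt_def] at h h'
    simp only [Sigma.mk.injEq, Prod.mk.injEq, heq_eq_eq, Fin.ext_iff, and_imp]
    omega
  · rintro ⟨⟨p, q⟩, a⟩ h
    simp only [Finset.mem_sigma, Finset.HasAntidiagonal.mem_antidiagonal, Finset.mem_range] at h
    refine ⟨(⟨a, by omega⟩, ⟨a + p + 1, by omega⟩), ?_, ?_⟩
    · simp only [Finset.mem_filter, Finset.mem_univ, true_and, Fin.lt_def]; omega
    · simp only [Sigma.mk.injEq, Prod.mk.injEq, heq_eq_eq, and_true]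
      omega
  · rintro ⟨a, b⟩ h
    simp only [Finset.mem_filter, Finset.mem_univ, true_and, Fin.lt_def] at h
    obtain ⟨p, hp⟩ : ∃ p, p = (b : ℕ) - a - 1 := ⟨_, rfl⟩
    obtain ⟨q, rfl⟩ : ∃ q, m = p + q := ⟨m - p, by omega⟩
    have hb : (b : ℕ) = a + p + 1 := by omega
    simp only [← hp, Nat.add_sub_cancel_left]
    rw [wfact_split g a p q (by omega) a b rfl hb, hb]
    ring

end cycles

/-! ### Recurrences with weights on the first two points -/

section recurrences
variable {R : Type*} [CommRing R] [Algebra ℚ R]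

/-- The weight sequence `x, y, 1, 1, …`. -/
def twoWt (x y : R) : ℕ → R
  | 0 => x
  | 1 => y
  | _ => 1

lemma twoWt_one_one (j : ℕ) : twoWt (1 : R) 1 j = 1 := by
  rcases j with _ | _ | j <;> rfl

lemma cyc_zero (g : ℕ → R) : cyc g 0 = 1 := by
  rw [cyc, wfact, if_pos (Subsingleton.elim (α := Perm (Fin 1)) _ _)]

lemma map_cyc_twoWt {S : Type*} [CommRing S] [Algebra ℚ S] (φ : R →+* S) (x y : R) (m : ℕ) :
    φ (cyc (twoWt x y) m) = cyc (twoWt (φ x) (φ y)) m := by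
  rw [map_cyc]
  congr 1
  funext j
  rcases j with _ | _ | j
  · rfl
  · rfl
  · exact map_one φ

/-- `cyc_succ` with only the point `0` weighted: either the removed transposition contains `0`, or
`0` lies in the second cycle. -/
lemma cyc_one_rec (x : R) (m : ℕ) :
    cyc (twoWt x 1) (m + 1) = ∑ c ∈ Finset.HasAntidiagonal.antidiagonal m, (m.choose c.1 : R) *
      (x * cyc (twoWt x 1) c.1 * cyc (twoWt 1 1) c.2 +
        c.2 * cyc (twoWt 1 1) c.1 * cyc (twoWt x 1) c.2) := by
  rw [cyc_succ]
  refine Finset.sum_congr rfl ?_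
  rintro ⟨p, q⟩ -
  congr 1
  have hx1 : ∀ j, twoWt x 1 (j + 1) = 1 := by rintro (_ | j) <;> rfl
  rw [Finset.sum_range_succ', add_comm]
  congr 1
  · have e1 : cyc (fun j => twoWt x 1 (0 + j)) p = cyc (twoWt x 1) p :=
      cyc_congr fun j _ => by rw [zero_add]
    have e2 : cyc (skip (twoWt x 1) 0 (p + 1)) q = cyc (twoWt 1 1) q :=
      cyc_congr fun j _ => by
        rw [twoWt_one_one, skip, if_neg (Nat.not_lt_zero _), ← add_assoc, hx1]
    rw [e1, e2, hx1, mul_one, mul_assoc]; rfl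
  · have : ∀ a ∈ Finset.range q, twoWt x 1 (a + 1) * twoWt x 1 (a + 1 + p + 1) *
        (cyc (fun j => twoWt x 1 (a + 1 + j)) p * cyc (skip (twoWt x 1) (a + 1) (p + 1)) q) =
        cyc (twoWt 1 1) p * cyc (twoWt x 1) q := by
      intro a _
      have e1 : cyc (fun j => twoWt x 1 (a + 1 + j)) p = cyc (twoWt 1 1) p :=
        cyc_congr fun j _ => by rw [twoWt_one_one, add_right_comm, hx1]
      have e2 : cyc (skip (twoWt x 1) (a + 1) (p + 1)) q = cyc (twoWt x 1) q :=
        cyc_congr fun j _ => by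
          rw [skip]
          split_ifs with h
          · rfl
          · obtain ⟨j, rfl⟩ : ∃ i, j = i + 1 := ⟨j - 1, by omega⟩
            rw [← add_assoc, hx1, hx1]
      rw [e1, e2, hx1, hx1, one_mul, one_mul]
    rw [Finset.sum_congr rfl this, Finset.sum_const, Finset.card_range, nsmul_eq_mul, mul_assoc]

/-- `cyc_succ` with the points `0` and `1` weighted. The four contributions are those of the swaps
`(0, 1)`, `(0, b)` with `b ≥ 2`, `(1, b)`, and `(a, b)` with `a ≥ 2`. -/
lemma cyc_two_rec (x y : R) (m : ℕ) :
    cyc (twoWt x y) (m + 1) = x * y * cyc (twoWt y 1) m +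
      ∑ c ∈ Finset.HasAntidiagonal.antidiagonal m, (m.choose c.1 : R) *
      (x * (if c.1 = 0 then 0 else cyc (twoWt x y) c.1) * cyc (twoWt 1 1) c.2 +
        y * cyc (twoWt y 1) c.1 * (if c.2 = 0 then 0 else cyc (twoWt x 1) c.2) +
        ((c.2 : R) - 1) * cyc (twoWt 1 1) c.1 * (if c.2 = 0 then 0 else cyc (twoWt x y) c.2)) := by
  have hx2 : ∀ j, twoWt x y (j + 1 + 1) = 1 := fun _ => rfl
  have h0 : x * y * cyc (twoWt y 1) m = ∑ c ∈ Finset.HasAntidiagonal.antidiagonal m, (m.choose c.1 : R) *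
      (if c.1 = 0 then x * y * cyc (twoWt y 1) c.2 else 0) := by
    rw [Finset.sum_eq_single (0, m)]
    · simp
    · rintro ⟨p, q⟩ h hne
      rw [if_neg, mul_zero]
      rintro rfl
      apply hne
      simpa using h
    · simp
  rw [h0, ← Finset.sum_add_distrib, cyc_succ]
  refine Finset.sum_congr rfl ?_
  rintro ⟨p, q⟩ -
  rw [← mul_add]
  congr 1
  rw [Finset.sum_range_succ', add_comm]
  have t0 : twoWt x y 0 * twoWt x y (0 + p + 1) *
      (cyc (fun j => twoWt x y (0 + j)) p * cyc (skip (twoWt x y) 0 (p + 1)) q) =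
      (if p = 0 then x * y * cyc (twoWt y 1) q else 0) +
      x * (if p = 0 then 0 else cyc (twoWt x y) p) * cyc (twoWt 1 1) q := by
    have e1 : cyc (fun j => twoWt x y (0 + j)) p = cyc (twoWt x y) p :=
      cyc_congr fun j _ => by rw [zero_add]
    rw [e1]
    rcases p with _ | p
    · have e2 : cyc (skip (twoWt x y) 0 (0 + 1)) q = cyc (twoWt y 1) q :=
        cyc_congr fun j _ => by
          rcases j with _ | _ | j <;> rfl
      rw [e2, cyc_zero, if_pos rfl, if_pos rfl, one_mul, mul_zero, zero_mul]
      exact (add_zero _).symm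
    · have e2 : cyc (skip (twoWt x y) 0 (p + 1 + 1)) q = cyc (twoWt 1 1) q :=
        cyc_congr fun j _ => by
          rw [twoWt_one_one]; rfl
      rw [e2, if_neg (by omega), if_neg (by omega), zero_add, hx2, mul_one, mul_assoc]
      exact (zero_add _).symm
  refine (congrArg₂ (· + ·) t0 rfl).trans ?_
  rw [add_assoc, add_assoc (_ * _ * _)]
  refine congrArg₂ (· + ·) rfl (congrArg₂ (· + ·) rfl ?_)
  dsimp only
  rcases q with _ | q
  · simp
  rw [if_neg (by omega), if_neg (by omega), Finset.sum_range_succ', add_comm]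
  congr 1
  · have e1 : cyc (fun j => twoWt x y (0 + 1 + j)) p = cyc (twoWt y 1) p :=
      cyc_congr fun j _ => by
        rw [add_comm]; rcases j with _ | _ | j <;> rfl
    have e2 : cyc (skip (twoWt x y) (0 + 1) (p + 1)) (q + 1) = cyc (twoWt x 1) (q + 1) :=
      cyc_congr fun j _ => by
        rcases j with _ | j
        · rfl
        · rw [skip, if_neg (by omega), show j + 1 + (p + 1) = (j + p) + 1 + 1 by omega, hx2]
          rcases j with _ | j <;> rfl
    rw [e1, e2, show 0 + 1 + p + 1 = p + 1 + 1 by omega, hx2, mul_one, mul_assoc]; rfl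
  · rw [show (((q + 1 : ℕ) : R) - 1) = (q : R) by push_cast; ring]
    have : ∀ a ∈ Finset.range q, twoWt x y (a + 1 + 1) * twoWt x y (a + 1 + 1 + p + 1) *
        (cyc (fun j => twoWt x y (a + 1 + 1 + j)) p *
          cyc (skip (twoWt x y) (a + 1 + 1) (p + 1)) (q + 1)) =
        cyc (twoWt 1 1) p * cyc (twoWt x y) (q + 1) := by
      intro a _
      have e1 : cyc (fun j => twoWt x y (a + 1 + 1 + j)) p = cyc (twoWt 1 1) p :=
        cyc_congr fun j _ => by
          rw [twoWt_one_one, show a + 1 + 1 + j = (a + j) + 1 + 1 by omega, hx2]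
      have e2 : cyc (skip (twoWt x y) (a + 1 + 1) (p + 1)) (q + 1) = cyc (twoWt x y) (q + 1) :=
        cyc_congr fun j _ => by
          rw [skip]
          split_ifs with h
          · rfl
          · obtain ⟨j, rfl⟩ : ∃ i, j = i + 1 + 1 := ⟨j - 2, by omega⟩
            rw [hx2, show j + 1 + 1 + (p + 1) = (j + p + 1) + 1 + 1 by omega, hx2]
      rw [e1, e2, hx2, show a + 1 + 1 + p + 1 = (a + p + 1) + 1 + 1 by omega, hx2, one_mul, one_mul]
    rw [Finset.sum_congr rfl this, Finset.sum_const, Finset.card_range, nsmul_eq_mul, mul_assoc]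

end recurrences

section coefficients
open Polynomial

/-- The number of minimal factorizations of the `(n + 1)`-cycle. -/
noncomputable def hNum (n : ℕ) : ℝ := cyc (twoWt (1 : ℝ) 1) n

/-- The number of minimal factorizations of the `(n + 1)`-cycle in which the point `0` appears
`i` times. -/
noncomputable def aNum (i n : ℕ) : ℝ := (cyc (twoWt (X : ℝ[X]) 1) n).coeff i

/-- The generating polynomial of the numbers of appearances of the points `0` (inner variable) and
`1` (outer variable) in the minimal factorizations of the `(n + 1)`-cycle. -/
noncomputable def gPoly (n : ℕ) : ℝ[X][X] := cyc (twoWt (C X : ℝ[X][X]) X) n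

/-- The number of minimal factorizations of the `(n + 1)`-cycle in which the points `0` and `1`
appear `i` and `j` times. It is set to `0` for `n = 0`, where the point `1` does not exist. -/
noncomputable def gNum (i j n : ℕ) : ℝ := if n = 0 then 0 else ((gPoly n).coeff j).coeff i

lemma hNum_zero : hNum 0 = 1 := cyc_zero _

lemma aNum_zero (i : ℕ) : aNum i 0 = if i = 0 then 1 else 0 := by
  rw [aNum, cyc_zero, coeff_one]

lemma cyc_one_one_poly (n : ℕ) : cyc (twoWt (1 : ℝ[X]) 1) n = C (hNum n) := by
  rw [hNum, map_cyc_twoWt, map_one]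

lemma cyc_one_one_poly₂ (n : ℕ) : cyc (twoWt (1 : ℝ[X][X]) 1) n = C (C (hNum n)) := by
  rw [← cyc_one_one_poly, map_cyc_twoWt, map_one]

lemma cyc_inner (n : ℕ) :
    cyc (twoWt (C X : ℝ[X][X]) 1) n = C (cyc (twoWt (X : ℝ[X]) 1) n) := by
  rw [map_cyc_twoWt, map_one]

lemma cyc_outer (n : ℕ) :
    cyc (twoWt (X : ℝ[X][X]) 1) n = (cyc (twoWt (X : ℝ[X]) 1) n).map C := by
  rw [← coe_mapRingHom, map_cyc_twoWt, map_one, coe_mapRingHom, map_X]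

lemma hNum_succ (m : ℕ) : hNum (m + 1) = ∑ c ∈ Finset.HasAntidiagonal.antidiagonal m,
    (m.choose c.1 : ℝ) * (hNum c.1 * hNum c.2 + c.2 * hNum c.1 * hNum c.2) := by
  simp only [hNum]
  rw [cyc_one_rec]
  simp only [one_mul]

lemma aNum_zero_succ (m : ℕ) : aNum 0 (m + 1) = ∑ c ∈ Finset.HasAntidiagonal.antidiagonal m,
    (m.choose c.1 : ℝ) * (c.2 * hNum c.1 * aNum 0 c.2) := by
  simp only [aNum]
  rw [cyc_one_rec, finsetSum_coeff]
  refine Finset.sum_congr rfl fun c _ => ?_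
  simp only [cyc_one_one_poly, ← C_eq_natCast, coeff_C_mul, coeff_add, mul_assoc, coeff_X_mul_zero,
    zero_add]

lemma aNum_succ_succ (i m : ℕ) :
    aNum (i + 1) (m + 1) = ∑ c ∈ Finset.HasAntidiagonal.antidiagonal m,
    (m.choose c.1 : ℝ) * (aNum i c.1 * hNum c.2 + c.2 * hNum c.1 * aNum (i + 1) c.2) := by
  simp only [aNum]
  rw [cyc_one_rec, finsetSum_coeff]
  refine Finset.sum_congr rfl fun c _ => ?_
  simp only [cyc_one_one_poly, ← C_eq_natCast, coeff_C_mul, coeff_add, mul_assoc, coeff_X_mul,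
    coeff_mul_C]

lemma coeff_coeff_ite (n i j : ℕ) :
    ((if n = 0 then (0 : ℝ[X][X]) else gPoly n).coeff j).coeff i = gNum i j n := by
  rw [gNum]; split_ifs <;> simp

lemma gPoly_succ (m : ℕ) : gPoly (m + 1) =
    X * (C X * (cyc (twoWt (X : ℝ[X]) 1) m).map C) +
    ∑ c ∈ Finset.HasAntidiagonal.antidiagonal m, C (C (m.choose c.1 : ℝ)) *
      (C X * ((if c.1 = 0 then 0 else gPoly c.1) * C (C (hNum c.2))) +
        X * ((cyc (twoWt (X : ℝ[X]) 1) c.1).map C *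
          C (if c.2 = 0 then 0 else cyc (twoWt (X : ℝ[X]) 1) c.2)) +
        C (C ((c.2 : ℝ) - 1)) * (C (C (hNum c.1)) * (if c.2 = 0 then 0 else gPoly c.2))) := by
  have e : ∀ P : ℝ[X][X], C X * X * P = X * (C X * P) := fun P => by
    rw [mul_comm (C X : ℝ[X][X]) X, mul_assoc]
  rw [gPoly, cyc_two_rec, cyc_outer, e]
  refine congrArg₂ (· + ·) rfl (Finset.sum_congr rfl fun c _ => ?_)
  simp only [cyc_one_one_poly₂, cyc_outer, cyc_inner, gPoly, map_sub, map_natCast, map_one,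
    apply_ite C, map_zero, mul_assoc]

lemma gNum_zero_succ (j m : ℕ) : gNum 0 (j + 1) (m + 1) =
    ∑ c ∈ Finset.HasAntidiagonal.antidiagonal m, (m.choose c.1 : ℝ) *
      (aNum j c.1 * (if c.2 = 0 then 0 else aNum 0 c.2) +
        ((c.2 : ℝ) - 1) * (hNum c.1 * gNum 0 (j + 1) c.2)) := by
  rw [gNum, if_neg (by omega), gPoly_succ, coeff_add, coeff_X_mul, coeff_C_mul, coeff_add,
    coeff_X_mul_zero, zero_add, finsetSum_coeff, finsetSum_coeff]
  refine Finset.sum_congr rfl fun c _ => ?_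
  simp only [coeff_add, coeff_C_mul, coeff_X_mul, coeff_mul_C, coeff_map, coeff_coeff_ite,
    coeff_X_mul_zero, zero_add]
  congr 3
  rw [aNum]; split_ifs <;> simp

lemma gNum_succ_succ (i j m : ℕ) : gNum (i + 1) (j + 1) (m + 1) =
    (if i = 0 then aNum j m else 0) +
    ∑ c ∈ Finset.HasAntidiagonal.antidiagonal m, (m.choose c.1 : ℝ) *
      (gNum i (j + 1) c.1 * hNum c.2 + aNum j c.1 * (if c.2 = 0 then 0 else aNum (i + 1) c.2) +
        ((c.2 : ℝ) - 1) * (hNum c.1 * gNum (i + 1) (j + 1) c.2)) := by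
  rw [gNum, if_neg (by omega), gPoly_succ, coeff_add, coeff_X_mul, coeff_C_mul, coeff_add,
    coeff_X_mul, finsetSum_coeff, finsetSum_coeff]
  congr 1
  · rw [coeff_map, coeff_C, aNum]
  refine Finset.sum_congr rfl fun c _ => ?_
  simp only [coeff_add, coeff_C_mul, coeff_X_mul, coeff_mul_C, coeff_map, coeff_coeff_ite]
  congr 4
  rw [aNum]; split_ifs <;> simp

end coefficients

/-! ### The weighted numbers count minimal factorizations -/

section counting
open Classical in
lemma sum_isSwap {R : Type*} [CommRing R] [Algebra ℚ R] {N : ℕ} (F : Perm (Fin N) → R) :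
    ∑ σ ∈ (Finset.univ : Finset (Perm (Fin N))).filter (fun σ => σ.IsSwap), F σ =
      ∑ a, ∑ b, (if a = b then 0 else algebraMap ℚ R (1 / 2) * F (swap a b)) := by
  rw [sum_pairs (fun a b => F (swap a b)) (fun a b => by rw [swap_comm])]
  symm
  refine Finset.sum_bij (fun x _ => swap x.1 x.2) ?_ ?_ ?_ (fun _ _ => rfl)
  · rintro ⟨a, b⟩ h
    simp only [Finset.mem_filter, Finset.mem_univ, true_and] at h ⊢
    exact ⟨a, b, h.ne, rfl⟩
  · rintro ⟨a, b⟩ h ⟨c, d⟩ h' e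
    simp only [Finset.mem_filter, Finset.mem_univ, true_and] at h h' e
    have e' := congrArg Perm.support e
    rw [Perm.support_swap h.ne, Perm.support_swap h'.ne] at e'
    have h1 : a ∈ ({c, d} : Finset (Fin N)) := by rw [← e']; simp
    have h2 : b ∈ ({c, d} : Finset (Fin N)) := by rw [← e']; simp
    simp only [Finset.mem_insert, Finset.mem_singleton] at h1 h2
    simp only [Prod.mk.injEq]
    omega
  · intro σ h
    simp only [Finset.mem_filter, Finset.mem_univ, true_and] at h
    obtain ⟨x, y, hxy, rfl⟩ := h
    rcases lt_or_gt_of_ne hxy with hlt | hlt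
    · exact ⟨(x, y), by simpa using hlt, rfl⟩
    · exact ⟨(y, x), by simpa using hlt, swap_comm _ _⟩

/-- The recursive definition of `wfact` agrees with the sum over tuples of transpositions. -/
lemma wfact_eq_sum {R : Type*} [CommRing R] [Algebra ℚ R] (g : ℕ → R) {N : ℕ} (k : ℕ)
    (π : Perm (Fin N)) :
    wfact (wt g N) k π = ∑ τ : Fin k → Perm (Fin N),
      open Classical in
      if (∀ ℓ, (τ ℓ).IsSwap) ∧ (List.ofFn τ).reverse.prod = π then
        ∏ ℓ, ∏ v ∈ (τ ℓ).support, g v else 0 := by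
  classical
  induction k generalizing π with
  | zero => simp [wfact, eq_comm]
  | succ k ih =>
    have e : wfact (wt g N) (k + 1) π = ∑ a : Fin N, ∑ b : Fin N, (if a = b then 0 else algebraMap ℚ R (1 / 2) *
        ((∏ v ∈ (swap a b).support, g v) * wfact (wt g N) k ((swap a b)⁻¹ * π))) := by
      rw [wfact]
      refine Finset.sum_congr rfl fun a _ => Finset.sum_congr rfl fun b _ => ?_
      rw [wt]
      split_ifs with h
      · rw [zero_mul]
      · rw [Perm.support_swap h, Finset.prod_pair h, swap_inv]; ring
    rw [e, ← sum_isSwap (fun σ => (∏ v ∈ σ.support, g v) * wfact (wt g N) k (σ⁻¹ * π)),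
      ← (Fin.snocEquiv (fun _ => Perm (Fin N))).sum_comp, Fintype.sum_prod_type,
      Finset.sum_filter]
    refine Finset.sum_congr rfl fun σ _ => ?_
    split_ifs with hσ
    · rw [ih, Finset.mul_sum]
      refine Finset.sum_congr rfl fun τ _ => ?_
      have h1 : (∀ ℓ, ((Fin.snocEquiv (fun _ => Perm (Fin N)) (σ, τ)) ℓ).IsSwap) ↔
          ∀ ℓ, (τ ℓ).IsSwap := by
        rw [Fin.forall_fin_succ']
        simp [Fin.snocEquiv, hσ]
      have h2 : (List.ofFn (Fin.snocEquiv (fun _ => Perm (Fin N)) (σ, τ))).reverse.prod =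
          σ * (List.ofFn τ).reverse.prod := by
        rw [List.ofFn_succ']
        simp [Fin.snocEquiv]
      rw [mul_ite, mul_zero, Fin.prod_univ_castSucc]
      refine if_congr ?_ ?_ rfl
      · rw [h1, h2, eq_inv_mul_iff_mul_eq]
      · simp only [Fin.snocEquiv, Equiv.coe_fn_mk, Fin.snoc_castSucc, Fin.snoc_last]
        ring
    · symm
      refine Finset.sum_eq_zero fun τ _ => if_neg fun h => hσ ?_
      have := h.1 (Fin.last k)
      simpa [Fin.snocEquiv] using this

open Polynomial in
/-- The cardinality in the theorem is `gNum`: the weight of `τ` is the monomial with exponents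
`Tcount τ 0` and `Tcount τ 1`. -/
lemma card_eq_gNum (n i j : ℕ) :
    (Nat.card {τ : Fin (n + 1) → Equiv.Perm (Fin (n + 2)) //
          IsMinFact τ ∧ Tcount τ 0 = i ∧ Tcount τ 1 = j} : ℝ) = gNum i j (n + 1) := by
  classical
  have hprod : ∀ τ : Fin (n + 1) → Equiv.Perm (Fin (n + 2)),
      ∏ ℓ, ∏ v ∈ (τ ℓ).support, twoWt (C X : ℝ[X][X]) X v =
        C (X ^ Tcount τ 0) * X ^ Tcount τ 1 := by
    intro τ
    have h1 : ∀ ℓ, ∏ v ∈ (τ ℓ).support, twoWt (C X : ℝ[X][X]) X v =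
        (if τ ℓ 0 ≠ 0 then C X else 1) * (if τ ℓ 1 ≠ 1 then X else 1) := by
      intro ℓ
      have : (τ ℓ).support = Finset.univ.filter fun v => τ ℓ v ≠ v := by
        ext v; simp
      rw [this, Finset.prod_filter, Fin.prod_univ_succ, Fin.prod_univ_succ]
      rw [Finset.prod_eq_one (s := (Finset.univ : Finset (Fin n))), mul_one]
      · rfl
      · intro v _
        split_ifs
        · rfl
        · rfl
    simp only [h1]
    rw [Finset.prod_mul_distrib, ← Finset.prod_filter, ← Finset.prod_filter, Finset.prod_const,
      Finset.prod_const, C_pow]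
    rfl
  rw [gNum, if_neg (by omega), gPoly, cyc, wfact_eq_sum, finsetSum_coeff, finsetSum_coeff,
    Nat.card_eq_fintype_card, Fintype.card_subtype, Finset.card_filter, Nat.cast_sum]
  refine Finset.sum_congr rfl fun τ _ => ?_
  rw [hprod]
  have : IsMinFact τ ↔ ((∀ ℓ, (τ ℓ).IsSwap) ∧ (List.ofFn τ).reverse.prod = finRotate (n + 1 + 1)) :=
    Iff.rfl
  by_cases hm : IsMinFact τ
  · rw [if_pos (this.1 hm), coeff_C_mul, coeff_X_pow]
    simp only [hm, true_and]
    by_cases hj : j = Tcount τ 1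
    · rw [if_pos hj, mul_one, coeff_X_pow]
      simp [hj, eq_comm]
    · rw [if_neg hj, mul_zero, coeff_zero, if_neg (fun h => hj h.2.symm), Nat.cast_zero]
  · rw [if_neg (fun h => hm (this.2 h)), if_neg (fun h => hm h.1)]
    simp

end counting

/-! ### Exponential generating functions -/

section series
open PowerSeries Finset.HasAntidiagonal

/-- The exponential generating function of a sequence. -/
noncomputable def egf (f : ℕ → ℝ) : ℝ⟦X⟧ := PowerSeries.mk fun n => f n / n.factorial

lemma egf_add (f g : ℕ → ℝ) : egf f + egf g = egf (fun n => f n + g n) := by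
  ext n; simp [egf, add_div]

lemma egf_mul (f g : ℕ → ℝ) : egf f * egf g =
    egf (fun n => ∑ c ∈ antidiagonal n, (n.choose c.1 : ℝ) * (f c.1 * g c.2)) := by
  ext n
  rw [coeff_mul]
  simp only [egf, coeff_mk]
  rw [Finset.sum_div]
  refine Finset.sum_congr rfl ?_
  rintro ⟨p, q⟩ h
  obtain rfl : p + q = n := by simpa using h
  have h := Nat.add_choose_mul_factorial_mul_factorial p q
  have h' : ((p + q).factorial : ℝ) = ((p + q).choose p : ℝ) * p.factorial * q.factorial := by
    rw [Nat.choose_symm_add]; exact_mod_cast h.symm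
  have hc : ((p + q).choose p : ℝ) ≠ 0 := by
    exact_mod_cast (Nat.choose_pos (Nat.le_add_right p q)).ne'
  simp only [h']
  have := Nat.factorial_ne_zero p
  have := Nat.factorial_ne_zero q
  field_simp

lemma derivative_egf (f : ℕ → ℝ) : d⁄dX ℝ (egf f) = egf (fun n => f (n + 1)) := by
  ext n
  rw [coeff_derivative]
  simp only [egf, coeff_mk, Nat.factorial_succ]
  have := Nat.factorial_ne_zero n
  push_cast
  field_simp

lemma X_mul_derivative_egf (f : ℕ → ℝ) : X * d⁄dX ℝ (egf f) = egf (fun n => n * f n) := by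
  rw [derivative_egf]
  ext n
  rcases n with _ | n
  · simp [egf]
  · rw [coeff_succ_X_mul]
    simp only [egf, coeff_mk, Nat.factorial_succ]
    have := Nat.factorial_ne_zero n
    push_cast
    field_simp

lemma constantCoeff_egf (f : ℕ → ℝ) : constantCoeff (egf f) = f 0 := by
  rw [← coeff_zero_eq_constantCoeff_apply]; simp [egf]

/-- The exponential generating function of `hNum`. -/
noncomputable def hSer : ℝ⟦X⟧ := egf hNum

/-- The exponential generating function of `aNum i`. -/
noncomputable def aSer (i : ℕ) : ℝ⟦X⟧ := egf (aNum i)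

/-- The exponential generating function of `gNum i j`. -/
noncomputable def gSer (i j : ℕ) : ℝ⟦X⟧ := egf (gNum i j)

/-- The tree series `T = X * H`, where `H` is `hSer`. -/
noncomputable def tSer : ℝ⟦X⟧ := X * hSer

lemma constantCoeff_hSer : constantCoeff hSer = 1 := by
  rw [hSer, constantCoeff_egf, hNum_zero]

lemma constantCoeff_tSer : constantCoeff tSer = 0 := by
  simp [tSer]

lemma hSer_ne_zero : hSer ≠ 0 := by
  intro h
  have := constantCoeff_hSer
  rw [h] at this
  simp at this

lemma one_sub_tSer_ne_zero : (1 - tSer : ℝ⟦X⟧) ≠ 0 := by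
  intro h
  have := congrArg constantCoeff h
  simp [constantCoeff_tSer] at this

lemma hSer_ode : d⁄dX ℝ hSer = hSer * hSer + hSer * (X * d⁄dX ℝ hSer) := by
  simp only [hSer]
  rw [X_mul_derivative_egf, derivative_egf, egf_mul, egf_mul, egf_add]
  congr 1
  funext m
  rw [hNum_succ, ← Finset.sum_add_distrib]
  refine Finset.sum_congr rfl fun c _ => ?_
  ring

lemma tSer_derivative : d⁄dX ℝ tSer = hSer + X * d⁄dX ℝ hSer := by
  rw [tSer, Derivation.leibniz, derivative_X, smul_eq_mul, smul_eq_mul, mul_one, add_comm]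

lemma tSer_ode : (1 - tSer) * d⁄dX ℝ tSer = hSer := by
  rw [tSer_derivative, tSer]
  linear_combination X * hSer_ode

/-- The differential form of `H = exp T`. -/
lemma hSer_derivative : d⁄dX ℝ hSer = hSer * d⁄dX ℝ tSer := by
  rw [tSer_derivative, mul_add]; exact hSer_ode

lemma aSer_zero : aSer 0 = 1 := by
  have h : d⁄dX ℝ (aSer 0) = hSer * (X * d⁄dX ℝ (aSer 0)) := by
    simp only [hSer, aSer]
    rw [X_mul_derivative_egf, derivative_egf, egf_mul]
    congr 1
    funext m
    rw [aNum_zero_succ]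
    refine Finset.sum_congr rfl fun c _ => ?_
    ring
  have h' : (1 - tSer) * d⁄dX ℝ (aSer 0) = 0 := by
    rw [tSer]; linear_combination h
  have h'' := (mul_eq_zero.1 h').resolve_left one_sub_tSer_ne_zero
  refine derivative.ext ?_ ?_
  · rw [h'']; simp
  · rw [aSer, constantCoeff_egf, aNum_zero]; simp

lemma aSer_succ (i : ℕ) : d⁄dX ℝ (aSer (i + 1)) = aSer i * d⁄dX ℝ tSer := by
  have h : d⁄dX ℝ (aSer (i + 1)) = aSer i * hSer + hSer * (X * d⁄dX ℝ (aSer (i + 1))) := by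
    simp only [hSer, aSer]
    rw [X_mul_derivative_egf, derivative_egf, egf_mul, egf_mul, egf_add]
    congr 1
    funext m
    rw [aNum_succ_succ, ← Finset.sum_add_distrib]
    refine Finset.sum_congr rfl fun c _ => ?_
    ring
  refine mul_left_cancel₀ one_sub_tSer_ne_zero ?_
  rw [← mul_left_comm, tSer_ode, tSer]
  linear_combination h

lemma derivative_tSer_pow (n : ℕ) :
    d⁄dX ℝ (tSer ^ (n + 1)) = C ((n : ℝ) + 1) * tSer ^ n * d⁄dX ℝ tSer := by
  rw [Derivation.leibniz_pow]
  simp [mul_assoc]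

lemma derivative_C_mul_tSer_pow (r : ℝ) (n : ℕ) :
    d⁄dX ℝ (C r * tSer ^ (n + 1)) = C (r * ((n : ℝ) + 1)) * tSer ^ n * d⁄dX ℝ tSer := by
  rw [Derivation.leibniz, derivative_C, derivative_tSer_pow, map_mul]
  simp [mul_assoc]

lemma aSer_eq (i : ℕ) : aSer i = C ((i.factorial : ℝ)⁻¹) * tSer ^ i := by
  induction i with
  | zero => simp [aSer_zero]
  | succ i ih =>
    refine derivative.ext ?_ ?_
    · rw [aSer_succ, ih, derivative_C_mul_tSer_pow]
      congr 3
      rw [Nat.factorial_succ]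
      have := Nat.factorial_ne_zero i
      push_cast
      field_simp
    · rw [aSer, constantCoeff_egf, aNum_zero]
      simp [constantCoeff_tSer]

/-- `hSer` is an integrating factor for the differential equations satisfied by `gSer i j`. -/
lemma gSer_ode_aux (i j : ℕ) (S : ℝ⟦X⟧)
    (h : d⁄dX ℝ (gSer i j) = S + hSer * (X * d⁄dX ℝ (gSer i j) - gSer i j)) :
    d⁄dX ℝ (gSer i j * hSer) = S * d⁄dX ℝ tSer := by
  refine mul_left_cancel₀ one_sub_tSer_ne_zero ?_
  rw [Derivation.leibniz, smul_eq_mul, smul_eq_mul, hSer_derivative]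
  have h1 := tSer_ode
  have h2 : (1 - tSer) * d⁄dX ℝ (gSer i j) = S - hSer * gSer i j := by
    rw [tSer]; linear_combination h
  linear_combination hSer * h2 + (gSer i j * hSer - S) * h1

lemma gNum_zero (i j : ℕ) : gNum i j 0 = 0 := by rw [gNum, if_pos rfl]

lemma aSer_sub_const (i : ℕ) :
    egf (fun n => if n = 0 then 0 else aNum i n) = aSer i - C (if i = 0 then 1 else 0) := by
  ext n
  rcases n with _ | n
  · simp [egf, aSer, aNum_zero]
  · by_cases hi : i = 0 <;> simp [egf, aSer, hi, coeff_one]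

lemma gSer_zero_left (j : ℕ) : gSer 0 (j + 1) = 0 := by
  have h : d⁄dX ℝ (gSer 0 (j + 1) * hSer) = 0 := by
    have := gSer_ode_aux 0 (j + 1) 0 ?_
    · rw [this, zero_mul]
    have e0 : egf (fun n => if n = 0 then 0 else aNum 0 n) = 0 := by
      rw [aSer_sub_const, aSer_zero]; simp
    have e1 : aSer j * egf (fun n => if n = 0 then 0 else aNum 0 n) = 0 := by
      rw [e0, mul_zero]
    have e2 : X * d⁄dX ℝ (gSer 0 (j + 1)) - gSer 0 (j + 1) =
        egf (fun n => ((n : ℝ) - 1) * gNum 0 (j + 1) n) := by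
      rw [gSer, X_mul_derivative_egf, sub_eq_iff_eq_add, egf_add]
      congr 1; funext n; ring
    rw [← e1, e2]
    simp only [hSer, aSer, gSer]
    rw [derivative_egf, egf_mul, egf_mul, egf_add]
    congr 1
    funext m
    rw [gNum_zero_succ, ← Finset.sum_add_distrib]
    refine Finset.sum_congr rfl fun c _ => ?_
    ring
  have : gSer 0 (j + 1) * hSer = 0 := by
    refine derivative.ext ?_ ?_
    · rw [h]; simp
    · rw [map_mul, gSer, constantCoeff_egf, gNum_zero]; simp
  exact (mul_eq_zero.1 this).resolve_right hSer_ne_zero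

lemma gSer_succ (i j : ℕ) : d⁄dX ℝ (gSer (i + 1) (j + 1) * hSer) =
    (C (if i = 0 then 1 else 0) * aSer j + gSer i (j + 1) * hSer + aSer j * aSer (i + 1)) *
      d⁄dX ℝ tSer := by
  apply gSer_ode_aux
  have e0 : aSer (i + 1) = egf (fun n => if n = 0 then 0 else aNum (i + 1) n) := by
    rw [aSer_sub_const]; simp
  have e2 : X * d⁄dX ℝ (gSer (i + 1) (j + 1)) - gSer (i + 1) (j + 1) =
      egf (fun n => ((n : ℝ) - 1) * gNum (i + 1) (j + 1) n) := by
    rw [gSer, X_mul_derivative_egf, sub_eq_iff_eq_add, egf_add]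
    congr 1; funext n; ring
  have e3 : C (if i = 0 then 1 else 0) * aSer j = egf (fun n => if i = 0 then aNum j n else 0) := by
    by_cases hi : i = 0
    · simp [hi, aSer]
    · ext n; simp [hi, egf]
  rw [e2, e3, e0]
  simp only [hSer, aSer, gSer]
  rw [derivative_egf, egf_mul, egf_mul, egf_mul, egf_add, egf_add, egf_add]
  congr 1
  funext m
  rw [gNum_succ_succ, add_assoc, add_assoc, ← Finset.sum_add_distrib, ← Finset.sum_add_distrib]
  congr 1
  refine Finset.sum_congr rfl fun c _ => ?_
  ring

/-- The closed form of `gSer (i + 1) (j + 1) * hSer`, by induction on `i`: both sides vanish at `0`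
and have the same derivative by `gSer_succ`. -/
lemma gSer_mul_hSer (i j : ℕ) : gSer (i + 1) (j + 1) * hSer =
    C (((i + 1).factorial : ℝ)⁻¹ * ((j + 1).factorial : ℝ)⁻¹ - ((i + j + 2).factorial : ℝ)⁻¹) *
      tSer ^ (i + j + 2) + C ((i + j + 1).factorial : ℝ)⁻¹ * tSer ^ (i + j + 1) := by
  have hc : ∀ i, constantCoeff (gSer (i + 1) (j + 1) * hSer) = 0 := fun i => by
    rw [map_mul, gSer, constantCoeff_egf, gNum_zero, zero_mul]
  induction i with
  | zero =>
    refine derivative.ext ?_ ?_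
    · rw [gSer_succ, gSer_zero_left, map_add, derivative_C_mul_tSer_pow, derivative_C_mul_tSer_pow,
        ← add_mul, aSer_eq, aSer_eq, zero_mul, add_zero, if_pos rfl, map_one, one_mul, add_comm]
      congr 1
      rw [mul_mul_mul_comm, ← map_mul, ← pow_add]
      have h1 := Nat.factorial_ne_zero j
      congr 2
      · congr 1
        simp only [zero_add, Nat.factorial_succ, Nat.factorial_zero]
        push_cast
        field_simp
        ring
      · ring
      · congr 1
        simp only [zero_add, Nat.factorial_succ]
        push_cast
        field_simp
      · simp
    · rw [hc]; simp [constantCoeff_tSer]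
  | succ i ih =>
    refine derivative.ext ?_ ?_
    · rw [gSer_succ, ih, map_add, derivative_C_mul_tSer_pow, derivative_C_mul_tSer_pow,
        ← add_mul, aSer_eq, aSer_eq, if_neg (by omega), map_zero, zero_mul, zero_add]
      congr 1
      rw [mul_mul_mul_comm, ← map_mul, ← pow_add, add_right_comm]
      have h1 := Nat.factorial_ne_zero j
      have h2 := Nat.factorial_ne_zero i
      have h3 := Nat.factorial_ne_zero (i + j)
      rw [show j + (i + 1 + 1) = i + j + 2 by ring, show i + 1 + j + 1 = i + j + 2 by ring,
        show i + 1 + j + 2 = i + j + 2 + 1 by ring, show i + 1 + j = i + j + 1 by ring, ← add_mul,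
        ← map_add]
      congr 3
      · simp only [Nat.factorial_succ]
        push_cast
        field_simp
        ring
      · simp only [Nat.factorial_succ]
        push_cast
        field_simp
    · rw [hc]; simp [constantCoeff_tSer]

lemma gSer_eq (i j : ℕ) : gSer (i + 1) (j + 1) =
    X * (C (((i + 1).factorial : ℝ)⁻¹ * ((j + 1).factorial : ℝ)⁻¹ - ((i + j + 2).factorial : ℝ)⁻¹) *
      tSer ^ (i + j + 1) + C ((i + j + 1).factorial : ℝ)⁻¹ * tSer ^ (i + j)) := by
  refine mul_right_cancel₀ hSer_ne_zero ?_
  rw [gSer_mul_hSer]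
  have : tSer = X * hSer := rfl
  linear_combination (C (((i + 1).factorial : ℝ)⁻¹ * ((j + 1).factorial : ℝ)⁻¹ - ((i + j + 2).factorial : ℝ)⁻¹) *
      tSer ^ (i + j + 1) + C ((i + j + 1).factorial : ℝ)⁻¹ * tSer ^ (i + j)) * this

end series

/-! ### Coefficients of powers of the tree series and the limit -/

section asymptotics
open PowerSeries

lemma X_mul_derivative_tSer : (1 - tSer) * (X * d⁄dX ℝ tSer) = tSer := by
  rw [mul_left_comm, tSer_ode, tSer]

lemma coeff_X_mul_derivative (f : ℝ⟦X⟧) (M : ℕ) :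
    coeff M (X * d⁄dX ℝ f) = M * coeff M f := by
  rcases M with _ | M
  · simp
  · rw [coeff_succ_X_mul, coeff_derivative]
    push_cast
    ring

/-- The coefficientwise form of `X * (T ^ r)' * (1 - T) = r * T ^ r`. -/
lemma coeff_tSer_pow_succ (r M : ℕ) (hM : M ≠ 0) :
    coeff M (tSer ^ (r + 2)) / ((r : ℝ) + 2) =
      coeff M (tSer ^ (r + 1)) / ((r : ℝ) + 1) * (1 - ((r + 1 : ℕ) : ℝ) / M) := by
  have h : C ((r : ℝ) + 2) * (X * d⁄dX ℝ (tSer ^ (r + 1))) -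
      C ((r : ℝ) + 1) * (X * d⁄dX ℝ (tSer ^ (r + 2))) =
      C (((r : ℝ) + 1) * ((r : ℝ) + 2)) * tSer ^ (r + 1) := by
    rw [derivative_tSer_pow, derivative_tSer_pow, map_mul]
    push_cast
    rw [show (r : ℝ) + 1 + 1 = r + 2 by ring]
    linear_combination C ((r : ℝ) + 1) * C ((r : ℝ) + 2) * tSer ^ r * X_mul_derivative_tSer
  have h' := congrArg (coeff M) h
  rw [map_sub, coeff_C_mul, coeff_C_mul, coeff_C_mul, coeff_X_mul_derivative,
    coeff_X_mul_derivative] at h'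
  have hM' : (M : ℝ) ≠ 0 := by exact_mod_cast hM
  have h1 : (r : ℝ) + 1 ≠ 0 := by positivity
  have h2 : (r : ℝ) + 2 ≠ 0 := by positivity
  push_cast
  field_simp
  linear_combination -h'

lemma coeff_tSer_pow_eq_prod (r M : ℕ) (hM : M ≠ 0) :
    coeff M (tSer ^ (r + 1)) =
      (r + 1) * coeff M tSer * ∏ s ∈ Finset.range (r + 1), (1 - (s : ℝ) / M) := by
  induction r with
  | zero => simp
  | succ r ih =>
    have h := coeff_tSer_pow_succ r M hM
    have h1 : (r : ℝ) + 1 ≠ 0 := by positivity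
    have h2 : (r : ℝ) + 2 ≠ 0 := by positivity
    rw [ih, div_eq_iff h2] at h
    rw [Finset.prod_range_succ, h]
    push_cast
    field_simp
    ring

lemma coeff_tSer_pow_self (M : ℕ) : coeff M (tSer ^ M) = 1 := by
  rw [tSer, mul_pow, coeff_X_pow_mul', if_pos le_rfl, Nat.sub_self,
    coeff_zero_eq_constantCoeff_apply, map_pow, constantCoeff_hSer, one_pow]

lemma prod_one_sub_div (M : ℕ) (hM : M ≠ 0) :
    ∏ s ∈ Finset.range M, (1 - (s : ℝ) / M) = M.factorial / (M : ℝ) ^ M := by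
  have hM' : (M : ℝ) ≠ 0 := by exact_mod_cast hM
  rw [← Finset.prod_range_reflect, eq_div_iff (pow_ne_zero _ hM'), ← Finset.prod_range_add_one_eq_factorial]
  have : (M : ℝ) ^ M = ∏ _s ∈ Finset.range M, (M : ℝ) := by simp
  rw [this, ← Finset.prod_mul_distrib, Nat.cast_prod]
  refine Finset.prod_congr rfl fun s hs => ?_
  have hs' := Finset.mem_range.1 hs
  rw [Nat.sub_sub, Nat.cast_sub (by omega)]
  push_cast
  field_simp
  ring

/-- The coefficient of the tree series follows from `coeff_tSer_pow_eq_prod` with the exponent equal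
to the index, where `coeff_tSer_pow_self` gives the value `1`. -/
lemma coeff_tSer (M : ℕ) (hM : M ≠ 0) :
    coeff M tSer = (M : ℝ) ^ M / (M * M.factorial) := by
  obtain ⟨r, rfl⟩ := Nat.exists_eq_succ_of_ne_zero hM
  have h := coeff_tSer_pow_eq_prod r (r + 1) hM
  rw [coeff_tSer_pow_self, prod_one_sub_div _ hM] at h
  have h1 := Nat.factorial_ne_zero (r + 1)
  have h2 : ((r : ℝ) + 1) ≠ 0 := by positivity
  have h1' : (((r + 1).factorial : ℕ) : ℝ) ≠ 0 := by exact_mod_cast h1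
  rw [Nat.succ_eq_add_one] at h ⊢
  push_cast at h ⊢
  rw [eq_div_iff (mul_ne_zero h2 h1')]
  rw [eq_comm, mul_div_assoc', div_eq_one_iff_eq (pow_ne_zero _ h2)] at h
  linear_combination h

/-- For `n ≥ 1` and `r ≥ 1` the sequence equals
`r * (1 + 1 / n) * (1 + 2 / n)⁻¹ ^ n * ∏ s < r, (1 - s / n)`. -/
lemma tendsto_coeff_tSer_pow (r : ℕ) :
    Tendsto (fun n : ℕ => ((n + 1).factorial : ℝ) * coeff n (tSer ^ r) / ((n : ℝ) + 2) ^ n) atTop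
      (nhds (r * Real.exp (-2))) := by
  rcases r with _ | r
  · rw [Nat.cast_zero, zero_mul]
    refine tendsto_const_nhds.congr' ?_
    filter_upwards [eventually_ne_atTop 0] with n hn
    simp [coeff_one, hn]
  have hinv : Tendsto (fun n : ℕ => (1 : ℝ) / n) atTop (nhds 0) := tendsto_one_div_atTop_nhds_zero_nat
  have hprod : Tendsto (fun n : ℕ => ∏ s ∈ Finset.range (r + 1), (1 - (s : ℝ) / n)) atTop
      (nhds (∏ s ∈ Finset.range (r + 1), (1 : ℝ))) := by
    refine tendsto_finsetProd _ fun s _ => ?_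
    have := (hinv.const_mul (s : ℝ)).const_sub 1
    simpa [div_eq_mul_inv] using this
  have hexp : Tendsto (fun n : ℕ => ((1 + (2 : ℝ) / n) ^ n)⁻¹) atTop (nhds (Real.exp (-2))) := by
    rw [Real.exp_neg]
    exact (Real.tendsto_one_add_div_pow_exp 2).inv₀ (Real.exp_ne_zero _)
  have hlin : Tendsto (fun n : ℕ => 1 + (1 : ℝ) / n) atTop (nhds (1 + 0)) := hinv.const_add 1
  have hall := ((hlin.mul hexp).mul hprod).const_mul ((r : ℝ) + 1)
  simp only [Finset.prod_const_one, add_zero, one_mul, mul_one] at hall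
  push_cast
  refine hall.congr' ?_
  filter_upwards [eventually_ne_atTop 0] with n hn
  rw [coeff_tSer_pow_eq_prod r n hn, coeff_tSer n hn, Nat.factorial_succ]
  have hn' : (n : ℝ) ≠ 0 := by exact_mod_cast hn
  have h1 : (n.factorial : ℝ) ≠ 0 := by exact_mod_cast Nat.factorial_ne_zero n
  have h2 : (n : ℝ) + 2 ≠ 0 := by positivity
  have h3 : 1 + (2 : ℝ) / n = (n + 2) / n := by field_simp
  rw [h3, div_pow, inv_div]
  generalize ∏ s ∈ Finset.range (r + 1), (1 - (s : ℝ) / n) = P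
  push_cast
  field_simp

lemma gNum_eq_coeff (i j n : ℕ) : gNum (i + 1) (j + 1) (n + 1) =
    (((i + 1).factorial : ℝ)⁻¹ * ((j + 1).factorial : ℝ)⁻¹ - ((i + j + 2).factorial : ℝ)⁻¹) *
      ((n + 1).factorial * coeff n (tSer ^ (i + j + 1))) +
    ((i + j + 1).factorial : ℝ)⁻¹ * ((n + 1).factorial * coeff n (tSer ^ (i + j))) := by
  have h := congrArg (coeff (n + 1)) (gSer_eq i j)
  rw [coeff_succ_X_mul, map_add, coeff_C_mul, coeff_C_mul, gSer, egf, coeff_mk,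
    div_eq_iff (by exact_mod_cast Nat.factorial_ne_zero (n + 1))] at h
  rw [h]
  ring

lemma tendsto_gNum (i j : ℕ) :
    Tendsto (fun n : ℕ => gNum (i + 1) (j + 1) (n + 1) / ((n : ℝ) + 2) ^ n) atTop
      (nhds ((((i + 1).factorial : ℝ)⁻¹ * ((j + 1).factorial : ℝ)⁻¹ -
          ((i + j + 2).factorial : ℝ)⁻¹) * (((i + j + 1 : ℕ) : ℝ) * Real.exp (-2)) +
        ((i + j + 1).factorial : ℝ)⁻¹ * (((i + j : ℕ) : ℝ) * Real.exp (-2)))) := by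
  refine (((tendsto_coeff_tSer_pow (i + j + 1)).const_mul _).add
    ((tendsto_coeff_tSer_pow (i + j)).const_mul _)).congr fun n => ?_
  rw [gNum_eq_coeff]
  ring

end asymptotics

end proof

/-- Corollary 1.2 (iv) of Kortchemski–Marzouk: asymptotics of the joint law of
`(T_1, T_2)` on uniform minimal factorizations of the `m`-cycle as `m → ∞`
(written with `m = n + 2`, so that everything is defined for every `n`). -/
theorem stmt_3 (i j : ℕ) (hi : 1 ≤ i) (hj : 1 ≤ j) :
    Tendsto (fun n : ℕ =>
      (Nat.card {τ : Fin (n + 1) → Equiv.Perm (Fin (n + 2)) //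
          IsMinFact τ ∧ Tcount τ 0 = i ∧ Tcount τ 1 = j} : ℝ) / ((n : ℝ) + 2) ^ n)
      atTop
      (nhds (Real.exp (-2) *
        ( ((i : ℝ) + (j : ℝ) - 2) / (((i + j - 1).factorial : ℝ))
          + ((i : ℝ) + (j : ℝ) - 1) / ((i.factorial : ℝ) * (j.factorial : ℝ))
          - ((i : ℝ) + (j : ℝ) - 1) / (((i + j).factorial : ℝ)) ))) := by
  obtain ⟨i, rfl⟩ := Nat.exists_eq_succ_of_ne_zero (Nat.one_le_iff_ne_zero.1 hi)
  obtain ⟨j, rfl⟩ := Nat.exists_eq_succ_of_ne_zero (Nat.one_le_iff_ne_zero.1 hj)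
  simp only [card_eq_gNum, Nat.succ_eq_add_one]
  convert tendsto_gNum i j using 2
  rw [show i + 1 + (j + 1) - 1 = i + j + 1 by omega, show i + 1 + (j + 1) = i + j + 2 by ring]
  push_cast
  ring
end

section
/- For every integer n ≥ 2 and all integers a, b, c ≥ 0, the number of Cayley trees t on {1, …, n} with deg_1(t) = a, |L_1(t)| = b and deg_2(t) = c equals the number of Cayley trees t on {1, …, n} with deg_1(t) = a, deg_2(t) = b and |L_1(t)| = c. (Equivalently, for a uniform random Cayley tree T_n, the triples (deg_1(T_n), |L_1(T_n)|, deg_2(T_n)) and (deg_1(T_n), deg_2(T_n), |L_1(T_n)|) have the same law; this confirms a conjecture of Caraceni.) -/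
/-!
The proof is bijective. Trees on a finite label set `S` are rooted at their smallest label `r` and
encoded by parent functions; `e` is the second smallest label, and the degree of a vertex other
than the root is one more than its number of children. The claim `Sym3 S`, that `(deg r, L, deg e)`
and `(deg r, deg e, L)` have the same law, is proved by strong induction on `S`.

Two facts follow from `Sym3 S`. Summing out one coordinate and relabelling, `(deg r, L)` has the
law of `(deg r, deg q)` for every `q ≠ r` (`Sym3.marginal`). Since `(deg r, deg q)` is exchangeable
(`card_root_symm`), so is `(L, deg r)` (`Sym3.len_root_symm`).

In the induction step, cut the edge from `e` to its parent `q`. This leaves a tree on `S \ C` with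
root `r` and a tree on `C` with root `e`, where `C` is the set of descendants of `e`
(`card_fiber`).

* If `q = r`, the greedy path goes from `r` to `e` and continues in the tree on `C`. So `L` and
  `deg e` are each one more than the path length and the root degree of that tree, and these are
  exchangeable by induction (`card_caseA`).
* If `q ≠ r`, the greedy path stays in the tree on `S \ C`, because `e` is smaller than all of its
  vertices other than `r`. By induction `L` may be replaced by the degree of `q` in that tree, which
  is the number of children of `q` in the whole tree (`card_caseB`). Exchanging the children of `q`
  other than `e` with the children of `e` is an involution that swaps this number with `deg e`
  (`card_parent_symm`).

Finally, parent functions with root `r` correspond bijectively to trees (`card_trees`).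
-/


/- The next vertex on the greedy increasing path: the smallest neighbour of `v`
with a larger label, or `v` itself if there is none. -/
open Classical in
noncomputable def greedyNext {m : ℕ} (t : SimpleGraph (Fin m)) (v : Fin m) : Fin m :=
  if h : (Finset.univ.filter fun w => t.Adj v w ∧ v < w).Nonempty
  then (Finset.univ.filter fun w => t.Adj v w ∧ v < w).min' h
  else v

/- The last vertex `v_M` of the greedy increasing path started at `v`
(after `m` steps the path has stabilised). -/
noncomputable def greedyLast {m : ℕ} (t : SimpleGraph (Fin m)) (v : Fin m) : Fin m :=
  (greedyNext t)^[m] v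

/- The number `M` of edges of the greedy increasing path started at `v`. -/
open Classical in
noncomputable def greedyLenFrom {m : ℕ} (t : SimpleGraph (Fin m)) (v : Fin m) : ℕ :=
  ((Finset.range m).filter fun k => (greedyNext t)^[k + 1] v ≠ (greedyNext t)^[k] v).card

/- `deg_1`: the degree of the vertex labelled `1` (index `0`). -/
noncomputable def deg1 {m : ℕ} (t : SimpleGraph (Fin m)) : ℕ :=
  if h : 0 < m then (t.neighborSet ⟨0, h⟩).ncard else 0

/- `deg_2`: the degree of the vertex labelled `2` (index `1`). -/
noncomputable def deg2 {m : ℕ} (t : SimpleGraph (Fin m)) : ℕ :=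
  if h : 1 < m then (t.neighborSet ⟨1, h⟩).ncard else 0

/- `|L_1(t)|`: the length of the greedy increasing path started at vertex `1`. -/
noncomputable def L1len {m : ℕ} (t : SimpleGraph (Fin m)) : ℕ :=
  if h : 0 < m then greedyLenFrom t ⟨0, h⟩ else 0

/- `deg'_2`: the degree of the last vertex of the greedy increasing path started at `1`. -/
noncomputable def deg2' {m : ℕ} (t : SimpleGraph (Fin m)) : ℕ :=
  if h : 0 < m then (t.neighborSet (greedyLast t ⟨0, h⟩)).ncard else 0

/-- `f` is the parent function of a tree with vertex set `S` rooted at `r`. The root is its own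
parent, and `f` is the identity off `S`, so that `f` is determined by the tree. -/
def IsRT {n : ℕ} (S : Finset (Fin n)) (r : Fin n) (f : Fin n → Fin n) : Prop :=
  r ∈ S ∧ f r = r ∧ (∀ u, u ∉ S → f u = u) ∧ (∀ u ∈ S, f u ∈ S) ∧ ∀ u ∈ S, ∃ k, f^[k] u = r

open Classical in
/-- The finite set of parent functions of trees with vertex set `S` and root `r`. -/
noncomputable def RT {n : ℕ} (S : Finset (Fin n)) (r : Fin n) : Finset (Fin n → Fin n) :=
  Finset.univ.filter (IsRT S r)

/-- The number of children of `v`; `u ≠ v` discards the loop at the root and the fixed points off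
`S`. -/
def numCh {n : ℕ} (f : Fin n → Fin n) (v : Fin n) : ℕ :=
  (Finset.univ.filter fun u => u ≠ v ∧ f u = v).card

open Classical in
/-- The smallest child of `v` whose label exceeds that of `v`, or `v` if there is none. -/
noncomputable def nextF {n : ℕ} (f : Fin n → Fin n) (v : Fin n) : Fin n :=
  if h : (Finset.univ.filter fun w => v < w ∧ f w = v).Nonempty
  then (Finset.univ.filter fun w => v < w ∧ f w = v).min' h
  else v

/-- The number of the first `n` steps of the orbit of `v` under `g` that are not stationary. -/
def orbitLen {n : ℕ} (g : Fin n → Fin n) (v : Fin n) : ℕ :=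
  ((Finset.range n).filter fun k => g^[k + 1] v ≠ g^[k] v).card

/-- The length of the greedy increasing path from `v` in the tree with parent function `f`. -/
noncomputable def lenF {n : ℕ} (f : Fin n → Fin n) (v : Fin n) : ℕ := orbitLen (nextF f) v

section

variable {n : ℕ}

lemma mem_RT {S : Finset (Fin n)} {r : Fin n} {f : Fin n → Fin n} : f ∈ RT S r ↔ IsRT S r f := by
  simp [RT]

lemma IsRT.iter_mem {S : Finset (Fin n)} {r : Fin n} {f : Fin n → Fin n} (h : IsRT S r f)
    {u : Fin n} (hu : u ∈ S) (k : ℕ) : f^[k] u ∈ S := by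
  induction k with
  | zero => simpa
  | succ k ih => rw [Function.iterate_succ_apply']; exact h.2.2.2.1 _ ih

lemma IsRT.iter_root {S : Finset (Fin n)} {r : Fin n} {f : Fin n → Fin n} (h : IsRT S r f)
    (k : ℕ) : f^[k] r = r := Function.iterate_fixed h.2.1 k

/-- The root is the only periodic vertex: a parent function has no cycle. -/
lemma IsRT.periodic {S : Finset (Fin n)} {r : Fin n} {f : Fin n → Fin n} (h : IsRT S r f)
    {u : Fin n} (hu : u ∈ S) {k : ℕ} (hk : 0 < k) (hper : f^[k] u = u) : u = r := by
  obtain ⟨j, hj⟩ := h.2.2.2.2 u hu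
  have h1 : f^[k * j] u = u := by
    rw [Function.iterate_mul]; exact Function.iterate_fixed hper j
  have h2 : k * j = (k * j - j) + j := by
    have : 1 * j ≤ k * j := Nat.mul_le_mul_right j hk
    omega
  rw [h2, Function.iterate_add_apply, hj, h.iter_root] at h1
  exact h1.symm

/-! ### Exchanging the children of a vertex and of one of its ancestors -/

open Classical in
/-- Exchanges the children of `x` with those of `y`, except that the vertices on the path from `y`
to the root keep their parents. It is used when `x` is a proper ancestor of `y`: then the child of
`x` leading to `y` stays in place. -/
noncomputable def swapCh (f : Fin n → Fin n) (x y u : Fin n) : Fin n :=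
  if ∃ k, f^[k] y = u then f u else Equiv.swap x y (f u)

/-- The path from `y` to the root is not changed by `swapCh`. -/
lemma swapCh_iter (f : Fin n → Fin n) (x y : Fin n) (i k : ℕ) :
    (swapCh f x y)^[k] (f^[i] y) = f^[k] (f^[i] y) := by
  induction k with
  | zero => rfl
  | succ k ih =>
    rw [Function.iterate_succ_apply', ih, Function.iterate_succ_apply', swapCh, if_pos]
    exact ⟨k + i, Function.iterate_add_apply _ _ _ _⟩

lemma swapCh_iter' (f : Fin n → Fin n) (x y : Fin n) (k : ℕ) :
    (swapCh f x y)^[k] y = f^[k] y := swapCh_iter f x y 0 k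

lemma swapCh_swapCh (f : Fin n → Fin n) (x y : Fin n) :
    swapCh (swapCh f x y) x y = f := by
  funext u
  by_cases hu : ∃ k, f^[k] y = u
  · simp [swapCh, swapCh_iter', hu]
  · rw [swapCh]
    simp only [swapCh_iter', hu, if_false]
    simp [swapCh, hu]

lemma IsRT.swapCh {S : Finset (Fin n)} {r : Fin n} {f : Fin n → Fin n} (h : IsRT S r f)
    {x y : Fin n} (hy : y ∈ S) (hx : ∃ k, f^[k] y = x) : IsRT S r (swapCh f x y) := by
  have hxS : x ∈ S := by obtain ⟨k, rfl⟩ := hx; exact h.iter_mem hy k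
  have hr : ∃ k, f^[k] y = r := h.2.2.2.2 y hy
  -- A vertex that reaches the path of `y` under `f` still does so after the exchange.
  have key : ∀ k u, (∃ j, f^[j] y = f^[k] u) →
      ∃ i j, f^[j] y = (_root_.swapCh f x y)^[i] u := by
    intro k
    induction k with
    | zero => intro u ⟨j, hj⟩; exact ⟨0, j, hj⟩
    | succ k ih =>
      intro u hu
      by_cases hp : ∃ j, f^[j] y = u
      · obtain ⟨j, hj⟩ := hp
        exact ⟨0, j, hj⟩
      have h1 : _root_.swapCh f x y u = Equiv.swap x y (f u) := by simp [_root_.swapCh, hp]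
      by_cases hux : f u = x
      · exact ⟨1, 0, by simp [h1, hux]⟩
      by_cases huy : f u = y
      · obtain ⟨j, hj⟩ := hx
        exact ⟨1, j, by simp [h1, huy, hj]⟩
      rw [Equiv.swap_apply_of_ne_of_ne hux huy] at h1
      rw [Function.iterate_succ_apply] at hu
      obtain ⟨i, j, hij⟩ := ih (f u) hu
      exact ⟨i + 1, j, by rw [Function.iterate_succ_apply, h1, hij]⟩
  refine ⟨h.1, ?_, ?_, ?_, ?_⟩
  · simp [_root_.swapCh, hr, h.2.1]
  · intro u hu
    have hfu := h.2.2.1 u hu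
    have : u ≠ x := by rintro rfl; exact hu hxS
    have : u ≠ y := by rintro rfl; exact hu hy
    simp [_root_.swapCh, Equiv.swap_apply_of_ne_of_ne, *]
  · intro u hu
    have := h.2.2.2.1 u hu
    unfold _root_.swapCh
    split_ifs
    · exact this
    · rw [Equiv.swap_apply_def]; split_ifs <;> assumption
  · intro u hu
    obtain ⟨k, hk⟩ := h.2.2.2.2 u hu
    obtain ⟨i, j, hij⟩ := key k u (hk ▸ hr)
    obtain ⟨m, hm⟩ := h.2.2.2.2 _ (h.iter_mem hy j)
    refine ⟨m + i, ?_⟩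
    rw [Function.iterate_add_apply, ← hij, swapCh_iter, hm]

open Classical in
/-- Children of `v` counted according to whether they lie on the path from `y` to the root. -/
lemma numCh_split (f : Fin n → Fin n) (y v : Fin n) : numCh f v =
    (Finset.univ.filter fun u => (∃ k, f^[k] y = u) ∧ u ≠ v ∧ f u = v).card +
    (Finset.univ.filter fun u => (¬ ∃ k, f^[k] y = u) ∧ u ≠ v ∧ f u = v).card := by
  rw [numCh, ← Finset.card_filter_add_card_filter_not (p := fun u => ∃ k, f^[k] y = u)]
  simp only [Finset.filter_filter]
  congr 2 <;> ext u <;> simp <;> tauto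

/-- No child of `y` lies on the path from `y` to the root. -/
lemma IsRT.path_ch_y {S : Finset (Fin n)} {r : Fin n} {f : Fin n → Fin n} (h : IsRT S r f)
    {y u : Fin n} (hy : y ∈ S) (hu : ∃ k, f^[k] y = u) (huy : u ≠ y) : f u ≠ y := by
  rintro hfu
  obtain ⟨k, rfl⟩ := hu
  rw [← Function.iterate_succ_apply' f] at hfu
  have := h.periodic hy (Nat.succ_pos k) hfu
  subst this
  exact huy (h.iter_root k)

/-- A proper ancestor `x` of `y` has exactly one child on the path from `y` to the root. -/
lemma IsRT.path_ch_x {S : Finset (Fin n)} {r : Fin n} {f : Fin n → Fin n} (h : IsRT S r f)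
    {x y : Fin n} (hy : y ∈ S) (hx : ∃ k, f^[k] y = x) (hxy : x ≠ y) :
    ∃ w, (∃ k, f^[k] y = w) ∧ w ≠ x ∧ f w = x ∧
      ∀ w', (∃ k, f^[k] y = w') → w' ≠ x → f w' = x → w' = w := by
  classical
  have hxS : x ∈ S := by obtain ⟨k, rfl⟩ := hx; exact h.iter_mem hy k
  have hk := Nat.find_spec hx
  have hmin := fun m => Nat.find_min hx (m := m)
  set k := Nat.find hx
  obtain _ | k := k
  · exact absurd hk.symm hxy
  refine ⟨f^[k] y, ⟨k, rfl⟩, hmin k (Nat.lt_succ_self k),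
    by rw [← Function.iterate_succ_apply' f, hk], ?_⟩
  have aux : ∀ i j, i < j → f (f^[i] y) = x → f^[j] y ≠ x → f (f^[j] y) = x → False := by
    intro i j hij hi hj hj'
    obtain ⟨d, rfl⟩ := Nat.exists_eq_add_of_lt hij
    have e1 : f^[i + d + 1] y = f^[d] x := by
      rw [← hi, ← Function.iterate_succ_apply' f i, ← Function.iterate_add_apply f d,
        show d + i.succ = i + d + 1 by omega]
    rw [e1, ← Function.iterate_succ_apply' f] at hj'
    have := h.periodic hxS (Nat.succ_pos d) hj'
    subst this
    rw [e1] at hj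
    exact hj (h.iter_root d)
  rintro w' ⟨j, rfl⟩ hne hf
  rcases lt_trichotomy k j with hlt | rfl | hlt
  · exact (aux k j hlt (by rw [← Function.iterate_succ_apply' f, hk]) hne hf).elim
  · rfl
  · exact (aux j k hlt hf (hmin k (Nat.lt_succ_self k))
      (by rw [← Function.iterate_succ_apply' f, hk])).elim

/-- Effect of the exchange on the numbers of children: since one child of `x` stays in place,
`numCh f x - 1` and `numCh f y` are exchanged. -/
lemma IsRT.numCh_swapCh {S : Finset (Fin n)} {r : Fin n} {f : Fin n → Fin n} (h : IsRT S r f)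
    {x y : Fin n} (hy : y ∈ S) (hx : ∃ k, f^[k] y = x) (hxy : x ≠ y) :
    numCh (_root_.swapCh f x y) x = numCh f y + 1 ∧
    numCh (_root_.swapCh f x y) y + 1 = numCh f x ∧
    ∀ v, v ≠ x → v ≠ y → numCh (_root_.swapCh f x y) v = numCh f v := by
  classical
  obtain ⟨w, hw1, hw2, hw3, hw4⟩ := h.path_ch_x hy hx hxy
  have hon : ∀ v, (Finset.univ.filter fun u => (∃ k, (_root_.swapCh f x y)^[k] y = u) ∧ u ≠ v ∧
      _root_.swapCh f x y u = v) =
      (Finset.univ.filter fun u => (∃ k, f^[k] y = u) ∧ u ≠ v ∧ f u = v) := by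
    intro v
    apply Finset.filter_congr
    intro u _
    simp only [swapCh_iter']
    constructor
    · rintro ⟨a, b, c⟩; rw [_root_.swapCh, if_pos a] at c; exact ⟨a, b, c⟩
    · rintro ⟨a, b, c⟩; exact ⟨a, b, by rw [_root_.swapCh, if_pos a, c]⟩
  have hoff : ∀ v, (Finset.univ.filter fun u => (¬ ∃ k, (_root_.swapCh f x y)^[k] y = u) ∧ u ≠ v ∧
      _root_.swapCh f x y u = v) =
      (Finset.univ.filter fun u => (¬ ∃ k, f^[k] y = u) ∧ u ≠ Equiv.swap x y v ∧
        f u = Equiv.swap x y v) := by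
    intro v
    apply Finset.filter_congr
    intro u _
    simp only [swapCh_iter']
    have hs : (¬ ∃ k, f^[k] y = u) → (u ≠ v ↔ u ≠ Equiv.swap x y v) := by
      intro hu
      have hux : u ≠ x := by rintro rfl; exact hu hx
      have huy : u ≠ y := by rintro rfl; exact hu ⟨0, rfl⟩
      rw [not_iff_not, ← Equiv.swap_apply_eq_iff, Equiv.swap_apply_of_ne_of_ne hux huy]
    constructor
    · rintro ⟨a, b, c⟩
      rw [_root_.swapCh, if_neg a] at c
      exact ⟨a, (hs a).1 b, (Equiv.swap_apply_eq_iff.1 c)⟩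
    · rintro ⟨a, b, c⟩
      exact ⟨a, (hs a).2 b, by rw [_root_.swapCh, if_neg a, c, Equiv.swap_apply_self]⟩
  have e : ∀ v, numCh (_root_.swapCh f x y) v =
      (Finset.univ.filter fun u => (∃ k, f^[k] y = u) ∧ u ≠ v ∧ f u = v).card +
      (Finset.univ.filter fun u => (¬ ∃ k, f^[k] y = u) ∧ u ≠ Equiv.swap x y v ∧
        f u = Equiv.swap x y v).card := by
    intro v
    rw [numCh_split _ y, hon, hoff]
  have hX : (Finset.univ.filter fun u => (∃ k, f^[k] y = u) ∧ u ≠ x ∧ f u = x).card = 1 := by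
    rw [Finset.card_eq_one]
    refine ⟨w, ?_⟩
    ext u
    simp only [Finset.mem_filter, Finset.mem_univ, true_and, Finset.mem_singleton]
    constructor
    · rintro ⟨a, b, c⟩; exact hw4 u a b c
    · rintro rfl; exact ⟨hw1, hw2, hw3⟩
  have hY : (Finset.univ.filter fun u => (∃ k, f^[k] y = u) ∧ u ≠ y ∧ f u = y).card = 0 := by
    rw [Finset.card_eq_zero, Finset.filter_eq_empty_iff]
    rintro u _ ⟨a, b, c⟩
    exact h.path_ch_y hy a b c
  refine ⟨?_, ?_, ?_⟩
  · rw [e, numCh_split f y y, hX, hY, Equiv.swap_apply_left]; omega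
  · rw [e, numCh_split f y x, hX, hY, Equiv.swap_apply_right]; omega
  · intro v hvx hvy
    rw [e, numCh_split f y v, Equiv.swap_apply_of_ne_of_ne hvx hvy]

/-- The degrees of the root `r` and of another vertex `p` are exchangeable (the degree of `p` is
`numCh f p + 1`). -/
lemma card_root_symm {S : Finset (Fin n)} {r p : Fin n} (hp : p ∈ S) (hpr : p ≠ r) (a b : ℕ) :
    ((RT S r).filter fun f => numCh f r = a ∧ numCh f p + 1 = b).card =
    ((RT S r).filter fun f => numCh f r = b ∧ numCh f p + 1 = a).card := by
  have aux : ∀ a b, ∀ f ∈ (RT S r).filter fun f => numCh f r = a ∧ numCh f p + 1 = b,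
      swapCh f r p ∈ (RT S r).filter fun f => numCh f r = b ∧ numCh f p + 1 = a := by
    intro a b f hf
    rw [Finset.mem_filter, mem_RT] at hf ⊢
    obtain ⟨h, h1, h2⟩ := hf
    have hr := h.2.2.2.2 p hp
    obtain ⟨h3, h4, -⟩ := h.numCh_swapCh hp hr hpr.symm
    exact ⟨h.swapCh hp hr, by omega, by omega⟩
  exact Finset.card_bij' (fun f _ => swapCh f r p) (fun f _ => swapCh f r p)
    (aux a b) (aux b a) (fun f _ => swapCh_swapCh f r p) (fun f _ => swapCh_swapCh f r p)

/-- Among trees in which `e` is not adjacent to the root, the number of children of the parent of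
`e` and the degree of `e` are exchangeable, jointly with the degree of the root. -/
lemma card_parent_symm {S : Finset (Fin n)} {r e : Fin n} (he : e ∈ S) (her : e ≠ r) (a b c : ℕ) :
    ((RT S r).filter fun f => f e ≠ r ∧ numCh f r = a ∧ numCh f (f e) = b ∧
      numCh f e + 1 = c).card =
    ((RT S r).filter fun f => f e ≠ r ∧ numCh f r = a ∧ numCh f (f e) = c ∧
      numCh f e + 1 = b).card := by
  have fe : ∀ f : Fin n → Fin n, swapCh f (f e) e e = f e := by
    intro f; rw [swapCh, if_pos ⟨0, rfl⟩]
  have aux : ∀ b c, ∀ f ∈ (RT S r).filter fun f => f e ≠ r ∧ numCh f r = a ∧ numCh f (f e) = b ∧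
      numCh f e + 1 = c, swapCh f (f e) e ∈ (RT S r).filter fun f => f e ≠ r ∧ numCh f r = a ∧
      numCh f (f e) = c ∧ numCh f e + 1 = b := by
    intro b c f hf
    rw [Finset.mem_filter, mem_RT] at hf ⊢
    obtain ⟨h, h0, h1, h2, h3⟩ := hf
    have hr : ∃ k, f^[k] e = f e := ⟨1, rfl⟩
    have hne : f e ≠ e := fun hh => her (h.periodic he (k := 1) one_pos hh)
    obtain ⟨h4, h5, h6⟩ := h.numCh_swapCh he hr hne
    rw [fe]
    exact ⟨h.swapCh he hr, h0, by rw [h6 r h0.symm her.symm, h1], by omega, by omega⟩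
  have inv : ∀ f : Fin n → Fin n, swapCh (swapCh f (f e) e) (swapCh f (f e) e e) e = f := by
    intro f; rw [fe, swapCh_swapCh]
  exact Finset.card_bij' (fun f _ => swapCh f (f e) e) (fun f _ => swapCh f (f e) e)
    (aux b c) (aux c b) (fun f _ => inv f) (fun f _ => inv f)

/-! ### Relabelling -/

lemma iterate_conj (σ : Equiv.Perm (Fin n)) (f : Fin n → Fin n) (k : ℕ) (u : Fin n) :
    (fun v => σ (f (σ.symm v)))^[k] u = σ (f^[k] (σ.symm u)) := by
  induction k with
  | zero => simp
  | succ k ih => simp only [Function.iterate_succ_apply', ih, Equiv.symm_apply_apply]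

/-- The joint law of the degrees of the root and of a non-root vertex `p` does not depend on `p`. -/
lemma card_relabel {S : Finset (Fin n)} {r p q : Fin n} (hp : p ∈ S) (hpr : p ≠ r)
    (hq : q ∈ S) (hqr : q ≠ r) (a b : ℕ) :
    ((RT S r).filter fun f => numCh f r = a ∧ numCh f p + 1 = b).card =
    ((RT S r).filter fun f => numCh f r = a ∧ numCh f q + 1 = b).card := by
  have hnum : ∀ (f : Fin n → Fin n) v,
      numCh (fun u => Equiv.swap p q (f (Equiv.swap p q u))) v = numCh f (Equiv.swap p q v) := by
    intro f v
    apply Finset.card_equiv (Equiv.swap p q)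
    intro u
    simp only [Finset.mem_filter, Finset.mem_univ, true_and, Equiv.swap_apply_eq_iff,
      ne_eq, Equiv.swap_apply_self]
  have hS : ∀ u, Equiv.swap p q u ∈ S ↔ u ∈ S := by
    intro u; rw [Equiv.swap_apply_def]; split_ifs <;> simp [*]
  have hr : Equiv.swap p q r = r := Equiv.swap_apply_of_ne_of_ne hpr.symm hqr.symm
  have hRT : ∀ f, IsRT S r f → IsRT S r (fun u => Equiv.swap p q (f (Equiv.swap p q u))) := by
    intro f h
    refine ⟨h.1, ?_, ?_, ?_, ?_⟩
    · simp [hr, h.2.1]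
    · intro u hu
      rw [← hS] at hu
      simp [h.2.2.1 _ hu]
    · intro u hu
      rw [hS]; exact h.2.2.2.1 _ ((hS u).2 hu)
    · intro u hu
      obtain ⟨k, hk⟩ := h.2.2.2.2 _ ((hS u).2 hu)
      refine ⟨k, ?_⟩
      have := iterate_conj (Equiv.swap p q) f k u
      rw [Equiv.symm_swap] at this
      rw [this, hk, hr]
  refine Finset.card_bij' (fun f _ u => Equiv.swap p q (f (Equiv.swap p q u)))
    (fun f _ u => Equiv.swap p q (f (Equiv.swap p q u))) ?_ ?_ ?_ ?_
  · intro f hf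
    rw [Finset.mem_filter, mem_RT] at hf ⊢
    exact ⟨hRT f hf.1, by rw [hnum, hr]; exact hf.2.1,
      by rw [hnum, Equiv.swap_apply_right]; exact hf.2.2⟩
  · intro f hf
    rw [Finset.mem_filter, mem_RT] at hf ⊢
    exact ⟨hRT f hf.1, by rw [hnum, hr]; exact hf.2.1,
      by rw [hnum, Equiv.swap_apply_left]; exact hf.2.2⟩
  · intro f _; funext u; simp
  · intro f _; funext u; simp

/-! ### Cutting a tree above a vertex -/

open Classical in
/-- The descendants of `e` in `S`, including `e`. -/
noncomputable def desc (S : Finset (Fin n)) (f : Fin n → Fin n) (e : Fin n) : Finset (Fin n) :=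
  S.filter fun u => ∃ k, f^[k] u = e

/-- The parent function of the tree that remains when the subtree with vertex set `C` is removed. -/
def outerPart (C : Finset (Fin n)) (f : Fin n → Fin n) (u : Fin n) : Fin n :=
  if u ∈ C then u else f u

/-- The parent function of the subtree with vertex set `C`, rooted at `e`. -/
def innerPart (C : Finset (Fin n)) (e : Fin n) (f : Fin n → Fin n) (u : Fin n) : Fin n :=
  if u ∈ C ∧ u ≠ e then f u else u

/-- The tree obtained from `g` and from the tree `h` on `C` rooted at `e` by giving `e` the
parent `q`. -/
def glue (C : Finset (Fin n)) (e q : Fin n) (g h : Fin n → Fin n) (u : Fin n) : Fin n :=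
  if u = e then q else if u ∈ C then h u else g u

section cut

variable {S C : Finset (Fin n)} {r e q : Fin n} {f g h : Fin n → Fin n}

lemma mem_desc {u : Fin n} : u ∈ desc S f e ↔ u ∈ S ∧ ∃ k, f^[k] u = e := by simp [desc]

lemma IsRT.desc_valid (hf : IsRT S r f) (he : e ∈ S) (her : e ≠ r) :
    e ∈ desc S f e ∧ desc S f e ⊆ S ∧ r ∉ desc S f e ∧ f e ∈ S ∧ f e ∉ desc S f e := by
  refine ⟨mem_desc.2 ⟨he, 0, rfl⟩, fun u hu => (mem_desc.1 hu).1, ?_, hf.2.2.2.1 e he, ?_⟩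
  · intro hr
    obtain ⟨-, k, hk⟩ := mem_desc.1 hr
    rw [hf.iter_root] at hk
    exact her hk.symm
  · intro hr
    obtain ⟨-, k, hk⟩ := mem_desc.1 hr
    rw [← Function.iterate_succ_apply] at hk
    exact her (hf.periodic he (Nat.succ_pos k) hk)

lemma IsRT.apply_mem_desc (hf : IsRT S r f) {u : Fin n} (hu : u ∈ desc S f e) (hue : u ≠ e) :
    f u ∈ desc S f e := by
  obtain ⟨hS, k, hk⟩ := mem_desc.1 hu
  obtain _ | k := k
  · exact absurd hk hue
  · exact mem_desc.2 ⟨hf.2.2.2.1 u hS, k, by rwa [Function.iterate_succ_apply] at hk⟩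

lemma apply_notMem_desc {u : Fin n} (hS : u ∈ S) (hu : u ∉ desc S f e) :
    f u ∉ desc S f e := by
  intro hd
  obtain ⟨-, k, hk⟩ := mem_desc.1 hd
  exact hu (mem_desc.2 ⟨hS, k + 1, by rwa [Function.iterate_succ_apply]⟩)

lemma IsRT.outerPart (hf : IsRT S r f) (he : e ∈ S) (her : e ≠ r) :
    IsRT (S \ desc S f e) r (outerPart (desc S f e) f) := by
  obtain ⟨h1, h2, h3, h4, h5⟩ := hf.desc_valid he her
  have step : ∀ u ∈ S \ desc S f e, _root_.outerPart (desc S f e) f u = f u := by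
    intro u hu
    simp [_root_.outerPart, (Finset.mem_sdiff.1 hu).2]
  have step2 : ∀ u ∈ S \ desc S f e, f u ∈ S \ desc S f e := by
    intro u hu
    obtain ⟨a, b⟩ := Finset.mem_sdiff.1 hu
    exact Finset.mem_sdiff.2 ⟨hf.2.2.2.1 u a, apply_notMem_desc a b⟩
  refine ⟨Finset.mem_sdiff.2 ⟨hf.1, h3⟩, by simp [_root_.outerPart, hf.2.1], ?_, ?_, ?_⟩
  · intro u hu
    by_cases hd : u ∈ desc S f e
    · simp [_root_.outerPart, hd]
    · have : u ∉ S := fun hS => hu (Finset.mem_sdiff.2 ⟨hS, hd⟩)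
      simp [_root_.outerPart, hf.2.2.1 u this]
  · intro u hu; rw [step u hu]; exact step2 u hu
  · intro u hu
    obtain ⟨k, hk⟩ := hf.2.2.2.2 u (Finset.mem_sdiff.1 hu).1
    refine ⟨k, ?_⟩
    rw [← hk]
    clear hk
    induction k generalizing u with
    | zero => rfl
    | succ k ih => rw [Function.iterate_succ_apply, Function.iterate_succ_apply, step u hu,
        ih _ (step2 u hu)]

lemma IsRT.innerPart (hf : IsRT S r f) (he : e ∈ S) (her : e ≠ r) :
    IsRT (desc S f e) e (innerPart (desc S f e) e f) := by
  obtain ⟨h1, h2, h3, h4, h5⟩ := hf.desc_valid he her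
  refine ⟨h1, by simp [_root_.innerPart], fun u hu => by simp [_root_.innerPart, hu], ?_, ?_⟩
  · intro u hu
    by_cases hue : u = e
    · simpa [_root_.innerPart, hue]
    · simpa [_root_.innerPart, hu, hue] using hf.apply_mem_desc hu hue
  · intro u hu
    obtain ⟨-, k, hk⟩ := mem_desc.1 hu
    induction k generalizing u with
    | zero => exact ⟨0, hk⟩
    | succ k ih =>
      by_cases hue : u = e
      · exact ⟨0, hue⟩
      · obtain ⟨j, hj⟩ := ih (f u) (hf.apply_mem_desc hu hue)
          (by rwa [Function.iterate_succ_apply] at hk)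
        exact ⟨j + 1, by rw [Function.iterate_succ_apply]; simpa [_root_.innerPart, hu, hue] using hj⟩

lemma glue_self : glue C e q g h e = q := by simp [glue]

lemma glue_mem {u : Fin n} (hu : u ∈ C) (hue : u ≠ e) : glue C e q g h u = h u := by
  simp [glue, hu, hue]

lemma glue_notMem (he : e ∈ C) {u : Fin n} (hu : u ∉ C) : glue C e q g h u = g u := by
  have : u ≠ e := by rintro rfl; exact hu he
  simp [glue, hu, this]

lemma glue_reach_e (hh : IsRT C e h) {u : Fin n} (hu : u ∈ C) :
    ∃ k, (glue C e q g h)^[k] u = e := by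
  obtain ⟨k, hk⟩ := hh.2.2.2.2 u hu
  induction k generalizing u with
  | zero => exact ⟨0, hk⟩
  | succ k ih =>
    by_cases hue : u = e
    · exact ⟨0, hue⟩
    · obtain ⟨j, hj⟩ := ih (hh.2.2.2.1 u hu) (by rwa [Function.iterate_succ_apply] at hk)
      exact ⟨j + 1, by rw [Function.iterate_succ_apply, glue_mem hu hue, hj]⟩

lemma glue_iter_outer (hg : IsRT (S \ C) r g) (he : e ∈ C) {u : Fin n} (hu : u ∈ S \ C) (k : ℕ) :
    (glue C e q g h)^[k] u = g^[k] u := by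
  induction k generalizing u with
  | zero => rfl
  | succ k ih => rw [Function.iterate_succ_apply, Function.iterate_succ_apply,
      glue_notMem he (Finset.mem_sdiff.1 hu).2, ih (hg.2.2.2.1 u hu)]

lemma IsRT.glue (hg : IsRT (S \ C) r g) (hh : IsRT C e h) (hC : C ⊆ S) (hq : q ∈ S \ C) :
    IsRT S r (glue C e q g h) := by
  have he := hh.1
  obtain ⟨hrS, hrC⟩ := Finset.mem_sdiff.1 hg.1
  have reach : ∀ u ∈ S \ C, ∃ k, (_root_.glue C e q g h)^[k] u = r := by
    intro u hu
    obtain ⟨k, hk⟩ := hg.2.2.2.2 u hu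
    exact ⟨k, by rw [glue_iter_outer hg he hu, hk]⟩
  refine ⟨hrS, by rw [glue_notMem he hrC, hg.2.1], ?_, ?_, ?_⟩
  · intro u hu
    rw [glue_notMem he (fun h => hu (hC h))]
    exact hg.2.2.1 u (fun h => hu (Finset.mem_sdiff.1 h).1)
  · intro u hu
    by_cases hue : u = e
    · rw [hue, glue_self]; exact (Finset.mem_sdiff.1 hq).1
    by_cases huC : u ∈ C
    · rw [glue_mem huC hue]; exact hC (hh.2.2.2.1 u huC)
    · rw [glue_notMem he huC]
      exact (Finset.mem_sdiff.1 (hg.2.2.2.1 u (Finset.mem_sdiff.2 ⟨hu, huC⟩))).1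
  · intro u hu
    by_cases huC : u ∈ C
    · obtain ⟨k, hk⟩ := glue_reach_e (q := q) (g := g) hh huC
      obtain ⟨j, hj⟩ := reach q hq
      refine ⟨j + 1 + k, ?_⟩
      rw [Function.iterate_add_apply, hk, Function.iterate_succ_apply, glue_self, hj]
    · exact reach u (Finset.mem_sdiff.2 ⟨hu, huC⟩)

lemma desc_glue (hg : IsRT (S \ C) r g) (hh : IsRT C e h) (hC : C ⊆ S) :
    desc S (glue C e q g h) e = C := by
  ext u
  rw [mem_desc]
  constructor
  · rintro ⟨hu, k, hk⟩
    by_contra huC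
    have hu' := Finset.mem_sdiff.2 ⟨hu, huC⟩
    rw [glue_iter_outer hg hh.1 hu'] at hk
    exact (Finset.mem_sdiff.1 (hk ▸ hg.iter_mem hu' k)).2 hh.1
  · intro hu
    exact ⟨hC hu, glue_reach_e hh hu⟩

/-- A tree whose vertex `e` has descendant set `C` and parent `q` is the same as a pair of a tree
on `S \ C` rooted at `r` and a tree on `C` rooted at `e`. -/
lemma card_fiber (he : e ∈ C) (hC : C ⊆ S) (hr : r ∉ C) (hqS : q ∈ S) (hqC : q ∉ C)
    (P Q : (Fin n → Fin n) → Prop) [DecidablePred P] [DecidablePred Q] :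
    ((RT S r).filter fun f => (desc S f e = C ∧ f e = q) ∧ P (outerPart C f) ∧ Q (innerPart C e f)).card =
    ((RT (S \ C) r).filter P).card * ((RT C e).filter Q).card := by
  have heS := hC he
  have her : e ≠ r := by rintro rfl; exact hr he
  have o : ∀ g h, IsRT (S \ C) r g → outerPart C (glue C e q g h) = g := by
    intro g h hg
    funext u
    by_cases huC : u ∈ C
    · rw [outerPart, if_pos huC, hg.2.2.1 u (fun h => (Finset.mem_sdiff.1 h).2 huC)]
    · rw [outerPart, if_neg huC, glue_notMem he huC]
  have i : ∀ g h, IsRT C e h → innerPart C e (glue C e q g h) = h := by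
    intro g h hh
    funext u
    by_cases huC : u ∈ C
    · by_cases hue : u = e
      · simp [innerPart, hue, hh.2.1]
      · rw [innerPart, if_pos ⟨huC, hue⟩, glue_mem huC hue]
    · rw [innerPart, if_neg (fun h => huC h.1), hh.2.2.1 u huC]
  rw [← Finset.card_product]
  refine Finset.card_bij' (fun f _ => (outerPart C f, innerPart C e f))
    (fun gh _ => glue C e q gh.1 gh.2) ?_ ?_ ?_ ?_
  · intro f hf
    rw [Finset.mem_filter, mem_RT] at hf
    obtain ⟨hf, ⟨rfl, -⟩, hP, hQ⟩ := hf
    simp only [Finset.mem_product, Finset.mem_filter, mem_RT]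
    exact ⟨⟨hf.outerPart heS her, hP⟩, hf.innerPart heS her, hQ⟩
  · rintro ⟨g, h⟩ hgh
    simp only [Finset.mem_product, Finset.mem_filter, mem_RT] at hgh ⊢
    obtain ⟨⟨hg, hP⟩, hh, hQ⟩ := hgh
    exact ⟨hg.glue hh hC (Finset.mem_sdiff.2 ⟨hqS, hqC⟩), ⟨desc_glue hg hh hC, glue_self⟩,
      by rwa [o g h hg], by rwa [i g h hh]⟩
  · intro f hf
    rw [Finset.mem_filter, mem_RT] at hf
    obtain ⟨hf, ⟨rfl, rfl⟩, hP, hQ⟩ := hf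
    funext u
    simp only [glue, innerPart, outerPart]
    split_ifs <;> simp_all
  · rintro ⟨g, h⟩ hgh
    simp only [Finset.mem_product, Finset.mem_filter, mem_RT] at hgh
    simp only [o g h hgh.1.1, i g h hgh.2.1]

/-! ### Statistics of the two parts -/

lemma IsRT.numCh_outer (hf : IsRT S r f) (he : e ∈ S) (her : e ≠ r) {v : Fin n}
    (hv : v ∉ desc S f e) :
    numCh f v = numCh (_root_.outerPart (desc S f e) f) v + if f e = v then 1 else 0 := by
  obtain ⟨h1, h2, h3, h4, h5⟩ := hf.desc_valid he her
  have hev : e ≠ v := by rintro rfl; exact hv h1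
  have key : ∀ u, (u ≠ v ∧ f u = v) ↔ ((u ≠ v ∧ _root_.outerPart (desc S f e) f u = v) ∨
      (u = e ∧ f e = v)) := by
    intro u
    by_cases hu : u ∈ desc S f e
    · by_cases hue : u = e
      · subst hue; simp [_root_.outerPart, h1, hev]
      · have : f u ≠ v := by
          intro h; exact hv (h ▸ hf.apply_mem_desc hu hue)
        simp [_root_.outerPart, hu, hue, this]
    · have : u ≠ e := by rintro rfl; exact hu h1
      simp [_root_.outerPart, hu, this]
  unfold numCh
  simp only [key]
  rw [Finset.filter_or, Finset.card_union_of_disjoint]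
  · congr 1
    split_ifs with hh
    · simp [hh, Finset.filter_eq']
    · simp [hh]
  · rw [Finset.disjoint_filter]
    rintro u _ ⟨_, h⟩ ⟨rfl, _⟩
    simp [_root_.outerPart, h1, hev] at h

lemma IsRT.numCh_inner (hf : IsRT S r f) (he : e ∈ S) (her : e ≠ r) :
    numCh f e = numCh (_root_.innerPart (desc S f e) e f) e := by
  obtain ⟨h1, h2, h3, h4, h5⟩ := hf.desc_valid he her
  unfold numCh
  congr 1
  apply Finset.filter_congr
  intro u _
  by_cases hu : u ∈ desc S f e
  · by_cases hue : u = e <;> simp [_root_.innerPart, hu, hue]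
  · have : f u ≠ e := by
      intro h
      by_cases hS : u ∈ S
      · exact hu (mem_desc.2 ⟨hS, 1, h⟩)
      · rw [hf.2.2.1 u hS] at h; exact hS (h ▸ he)
    have h' : u ≠ e := by rintro rfl; exact hu h1
    simp [_root_.innerPart, hu, this, h']

end cut

lemma nextF_congr {f g : Fin n → Fin n} {v : Fin n} (h : ∀ w, v < w → (f w = v ↔ g w = v)) :
    nextF f v = nextF g v := by
  have : (Finset.univ.filter fun w => v < w ∧ f w = v) =
      (Finset.univ.filter fun w => v < w ∧ g w = v) := by
    apply Finset.filter_congr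
    intro w _
    exact and_congr_right (h w)
  unfold nextF
  simp only [this]

lemma nextF_cases (f : Fin n → Fin n) (v : Fin n) :
    nextF f v = v ∨ (v < nextF f v ∧ f (nextF f v) = v) := by
  unfold nextF
  split_ifs with h
  · right
    have := Finset.min'_mem _ h
    simpa using this
  · left; rfl

lemma le_nextF (f : Fin n → Fin n) (v : Fin n) : v ≤ nextF f v := by
  rcases nextF_cases f v with h | h
  · exact h.ge
  · exact h.1.le

lemma orbitLen_congr {g g' : Fin n → Fin n} {v : Fin n} (p : Fin n → Prop) (hv : p v)
    (hg : ∀ u, p u → p (g u)) (h : ∀ u, p u → g u = g' u) : orbitLen g v = orbitLen g' v := by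
  have hp : ∀ k, p (g^[k] v) := by
    intro k
    induction k with
    | zero => exact hv
    | succ k ih => rw [Function.iterate_succ_apply']; exact hg _ ih
  have : ∀ k, g^[k] v = g'^[k] v := by
    intro k
    induction k with
    | zero => rfl
    | succ k ih => rw [Function.iterate_succ_apply', Function.iterate_succ_apply', ← ih, h _ (hp k)]
  simp only [orbitLen, this]

/-- Under a map with `u ≤ g u`, the orbit has reached a label at least `k + 1` when its step `k` is
not stationary; hence in `Fin n` the step `n - 1` is stationary. -/
lemma orbit_growth {g : Fin n → Fin n} (hg : ∀ u, u ≤ g u) (v : Fin n) (k : ℕ)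
    (h : g^[k + 1] v ≠ g^[k] v) : k + 1 ≤ (g^[k + 1] v : ℕ) := by
  have hlt : g^[k] v < g^[k + 1] v := by
    refine lt_of_le_of_ne ?_ h.symm
    rw [Function.iterate_succ_apply']; exact hg _
  induction k with
  | zero => simp only [Fin.lt_def] at hlt; omega
  | succ k ih =>
    by_cases h' : g^[k + 1] v = g^[k] v
    · exfalso; apply h
      rw [Function.iterate_succ_apply', h', ← Function.iterate_succ_apply' g, h']
    · have hlt' : g^[k] v < g^[k + 1] v := by
        refine lt_of_le_of_ne ?_ (Ne.symm h')
        rw [Function.iterate_succ_apply' g k]; exact hg _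
      have := ih h' hlt'
      simp only [Fin.lt_def] at hlt
      omega

lemma orbitLen_succ {g : Fin n → Fin n} (hg : ∀ u, u ≤ g u) {v : Fin n} (hv : g v ≠ v) :
    orbitLen g v = orbitLen g (g v) + 1 := by
  have key : ∀ u N, n ≤ N + 1 → orbitLen g u =
      ((Finset.range N).filter fun k => g^[k + 1] u ≠ g^[k] u).card := by
    intro u N hN
    unfold orbitLen
    congr 1
    ext k
    simp only [Finset.mem_filter, Finset.mem_range, and_congr_left_iff]
    intro hk
    have := orbit_growth hg u k hk
    have h2 := (g^[k + 1] u).isLt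
    omega
  rw [key v (n + 1) (by omega), key (g v) n (by omega), Finset.card_filter, Finset.card_filter,
    Finset.sum_range_succ']
  simp only [Function.iterate_succ_apply, Function.iterate_zero, id, ne_eq, hv,
    not_false_eq_true, if_true]
  congr!

lemma orbitLen_le (g : Fin n → Fin n) (v : Fin n) : orbitLen g v ≤ n :=
  (Finset.card_filter_le _ _).trans (by simp)

lemma numCh_le (f : Fin n → Fin n) (v : Fin n) : numCh f v ≤ n :=
  (Finset.card_filter_le _ _).trans (by simp)

section cut

variable {S C : Finset (Fin n)} {r e q : Fin n} {f g h : Fin n → Fin n}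

lemma IsRT.nextF_mem (hf : IsRT S r f) {v : Fin n} (hv : v ∈ S) : nextF f v ∈ S := by
  rcases nextF_cases f v with h | ⟨h1, h2⟩
  · rwa [h]
  · by_contra hS
    rw [hf.2.2.1 _ hS] at h2
    exact h1.ne h2.symm

/-- If the second smallest vertex `e` is not a child of the root, it is never on the greedy path,
and neither is any of its descendants. -/
lemma IsRT.lenF_outer (hf : IsRT S r f) (he : e ∈ S) (her : e ≠ r)
    (hmin : ∀ u ∈ S, u = r ∨ e ≤ u) (hq : f e ≠ r) :
    lenF f r = lenF (_root_.outerPart (desc S f e) f) r := by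
  obtain ⟨h1, h2, h3, h4, h5⟩ := hf.desc_valid he her
  refine (orbitLen_congr (fun u => u ∈ S \ desc S f e) (hf.outerPart he her).1
    (fun u hu => (hf.outerPart he her).nextF_mem hu) ?_).symm
  intro v hv
  obtain ⟨hvS, hvd⟩ := Finset.mem_sdiff.1 hv
  apply nextF_congr
  intro w hw
  by_cases hwd : w ∈ desc S f e
  · rw [_root_.outerPart, if_pos hwd]
    refine iff_of_false hw.ne' ?_
    by_cases hwe : w = e
    · subst hwe
      rcases hmin v hvS with rfl | h
      · exact hq
      · exact absurd hw h.not_gt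
    · intro h; exact hvd (h ▸ hf.apply_mem_desc hwd hwe)
  · rw [_root_.outerPart, if_neg hwd]

/-- If the second smallest vertex `e` is a child of the root, the greedy path starts with `r → e`. -/
lemma IsRT.lenF_inner (hf : IsRT S r f) (he : e ∈ S) (hre : r < e)
    (hmin : ∀ u ∈ S, u = r ∨ e ≤ u) (hq : f e = r) :
    lenF f r = lenF (_root_.innerPart (desc S f e) e f) e + 1 := by
  have her := hre.ne'
  obtain ⟨h1, h2, h3, h4, h5⟩ := hf.desc_valid he her
  have hnext : nextF f r = e := by
    have hmem : e ∈ Finset.univ.filter fun w => r < w ∧ f w = r := by simp [hre, hq]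
    have hne : (Finset.univ.filter fun w => r < w ∧ f w = r).Nonempty := ⟨e, hmem⟩
    apply le_antisymm
    · rw [nextF, dif_pos hne]; exact Finset.min'_le _ _ hmem
    · have hn := hf.nextF_mem hf.1
      rcases hmin _ hn with h | h
      · exfalso
        have := Finset.min'_mem _ hne
        rw [nextF, dif_pos hne] at h
        rw [h] at this
        simp at this
      · exact h
  unfold lenF
  rw [orbitLen_succ (le_nextF f) (by rw [hnext]; exact her), hnext]
  congr 1
  refine (orbitLen_congr (fun u => u ∈ desc S f e) h1
    (fun u hu => (hf.innerPart he her).nextF_mem hu) ?_).symm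
  intro v hv
  apply nextF_congr
  intro w hw
  by_cases hwd : w ∈ desc S f e
  · by_cases hwe : w = e
    · subst hwe
      rw [hq]
      simp only [_root_.innerPart, ne_eq, not_true_eq_false, and_false, if_false]
      refine iff_of_false hw.ne' ?_
      rintro rfl
      exact h3 hv
    · rw [_root_.innerPart, if_pos ⟨hwd, hwe⟩]
  · rw [_root_.innerPart, if_neg (fun h => hwd h.1)]
    refine iff_of_false hw.ne' ?_
    rintro rfl
    by_cases hwS : w ∈ S
    · exact apply_notMem_desc hwS hwd hv
    · rw [hf.2.2.1 w hwS] at hw; exact lt_irrefl _ hw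

end cut

/-! ### The symmetry for parent functions -/

/-- Two properties have equally many trees if they do for each value of the descendant set and
of the parent of `e`. -/
lemma card_eq_of_fibers {S : Finset (Fin n)} {r e : Fin n} (he : e ∈ S) (her : e ≠ r)
    (P P' : (Fin n → Fin n) → Prop) [DecidablePred P] [DecidablePred P']
    (H : ∀ C q, e ∈ C → C ⊆ S → r ∉ C → q ∈ S → q ∉ C →
      ((RT S r).filter fun f => (desc S f e = C ∧ f e = q) ∧ P f).card =
      ((RT S r).filter fun f => (desc S f e = C ∧ f e = q) ∧ P' f).card) :
    ((RT S r).filter P).card = ((RT S r).filter P').card := by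
  have fib : ∀ (P : (Fin n → Fin n) → Prop) [DecidablePred P], ((RT S r).filter P).card = ∑ x : Finset (Fin n) × Fin n,
      ((RT S r).filter fun f => (desc S f e = x.1 ∧ f e = x.2) ∧ P f).card := by
    intro P _
    rw [Finset.card_eq_sum_card_fiberwise (f := fun f => (desc S f e, f e)) (t := Finset.univ)
      (fun _ _ => Finset.mem_univ _)]
    refine Finset.sum_congr rfl fun x _ => ?_
    rw [Finset.filter_filter]
    congr 1
    apply Finset.filter_congr
    intro f _
    rw [Prod.ext_iff]
    exact and_comm
  rw [fib P, fib P']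
  refine Finset.sum_congr rfl ?_
  rintro ⟨C, q⟩ _
  by_cases hv : e ∈ C ∧ C ⊆ S ∧ r ∉ C ∧ q ∈ S ∧ q ∉ C
  · exact H C q hv.1 hv.2.1 hv.2.2.1 hv.2.2.2.1 hv.2.2.2.2
  · have : ∀ (P : (Fin n → Fin n) → Prop) [DecidablePred P],
        ((RT S r).filter fun f => (desc S f e = C ∧ f e = q) ∧ P f) = ∅ := by
      intro P _
      rw [Finset.filter_eq_empty_iff]
      rintro f hf ⟨⟨rfl, rfl⟩, -⟩
      exact hv ((mem_RT.1 hf).desc_valid he her)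
    simp only [this]

/-- The symmetry restricted to trees in which the second smallest vertex `e` is a child of the
root: it follows from the symmetry of path length and root degree in the subtree of `e`. -/
lemma card_caseA {S : Finset (Fin n)} {r e : Fin n} (he : e ∈ S) (hre : r < e)
    (hmin : ∀ u ∈ S, u = r ∨ e ≤ u)
    (IH : ∀ C, e ∈ C → C ⊆ S → r ∉ C → ∀ b c,
      ((RT C e).filter fun h => lenF h e = b ∧ numCh h e = c).card =
      ((RT C e).filter fun h => lenF h e = c ∧ numCh h e = b).card) (a b c : ℕ) :
    ((RT S r).filter fun f => f e = r ∧ numCh f r = a ∧ lenF f r = b ∧ numCh f e + 1 = c).card =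
    ((RT S r).filter fun f => f e = r ∧ numCh f r = a ∧ lenF f r = c ∧ numCh f e + 1 = b).card := by
  apply card_eq_of_fibers he hre.ne'
  intro C q heC hC hr hqS hqC
  by_cases hq : q = r
  swap
  · congr 1
    apply Finset.filter_congr
    rintro f -
    constructor <;> rintro ⟨⟨-, rfl⟩, h, -⟩ <;> exact absurd h hq
  subst hq
  have red : ∀ b c, ((RT S q).filter fun f => (desc S f e = C ∧ f e = q) ∧ f e = q ∧
      numCh f q = a ∧ lenF f q = b ∧ numCh f e + 1 = c) =
      ((RT S q).filter fun f => (desc S f e = C ∧ f e = q) ∧ numCh (outerPart C f) q + 1 = a ∧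
        (lenF (innerPart C e f) e + 1 = b ∧ numCh (innerPart C e f) e + 1 = c)) := by
    intro b c
    apply Finset.filter_congr
    intro f hf
    rw [mem_RT] at hf
    apply and_congr_right
    rintro ⟨rfl, hfe⟩
    rw [hf.numCh_outer he hre.ne' hqC, if_pos hfe, hf.lenF_inner he hre hmin hfe,
      ← hf.numCh_inner he hre.ne']
    simp [hfe]
  rw [red, red, card_fiber heC hC hr hqS hqC (fun g => numCh g q + 1 = a)
      (fun h => lenF h e + 1 = b ∧ numCh h e + 1 = c),
    card_fiber heC hC hr hqS hqC (fun g => numCh g q + 1 = a)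
      (fun h => lenF h e + 1 = c ∧ numCh h e + 1 = b)]
  congr 1
  obtain _ | b := b
  · simp
  obtain _ | c := c
  · simp
  simpa using IH C heC hC hr b c

/-- For trees in which the second smallest vertex `e` is not a child of the root, the path length
can be replaced by the number of children of the parent of `e`. -/
lemma card_caseB {S : Finset (Fin n)} {r e : Fin n} (he : e ∈ S) (hre : r < e)
    (hmin : ∀ u ∈ S, u = r ∨ e ≤ u)
    (IH : ∀ R, R ⊆ S → e ∉ R → ∀ q ∈ R, q ≠ r → ∀ a b,
      ((RT R r).filter fun h => numCh h r = a ∧ lenF h r = b).card =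
      ((RT R r).filter fun h => numCh h r = a ∧ numCh h q + 1 = b).card) (a b c : ℕ) :
    ((RT S r).filter fun f => f e ≠ r ∧ numCh f r = a ∧ lenF f r = b ∧ numCh f e + 1 = c).card =
    ((RT S r).filter fun f => f e ≠ r ∧ numCh f r = a ∧ numCh f (f e) = b ∧
      numCh f e + 1 = c).card := by
  apply card_eq_of_fibers he hre.ne'
  intro C q heC hC hr hqS hqC
  by_cases hq : q = r
  · congr 1
    apply Finset.filter_congr
    rintro f -
    constructor <;> rintro ⟨⟨-, rfl⟩, h, -⟩ <;> exact absurd hq h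
  have red1 : ((RT S r).filter fun f => (desc S f e = C ∧ f e = q) ∧ f e ≠ r ∧
      numCh f r = a ∧ lenF f r = b ∧ numCh f e + 1 = c) =
      ((RT S r).filter fun f => (desc S f e = C ∧ f e = q) ∧
        (numCh (outerPart C f) r = a ∧ lenF (outerPart C f) r = b) ∧ numCh (innerPart C e f) e + 1 = c) := by
    apply Finset.filter_congr
    intro f hf
    rw [mem_RT] at hf
    apply and_congr_right
    rintro ⟨rfl, rfl⟩
    rw [hf.numCh_outer he hre.ne' hr, if_neg hq, hf.lenF_outer he hre.ne' hmin hq,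
      ← hf.numCh_inner he hre.ne']
    simp [hq, and_assoc]
  have red2 : ((RT S r).filter fun f => (desc S f e = C ∧ f e = q) ∧ f e ≠ r ∧
      numCh f r = a ∧ numCh f (f e) = b ∧ numCh f e + 1 = c) =
      ((RT S r).filter fun f => (desc S f e = C ∧ f e = q) ∧
        (numCh (outerPart C f) r = a ∧ numCh (outerPart C f) q + 1 = b) ∧
          numCh (innerPart C e f) e + 1 = c) := by
    apply Finset.filter_congr
    intro f hf
    rw [mem_RT] at hf
    apply and_congr_right
    rintro ⟨rfl, rfl⟩
    rw [hf.numCh_outer he hre.ne' hr, if_neg hq, hf.numCh_outer he hre.ne' hqC, if_pos rfl,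
      ← hf.numCh_inner he hre.ne']
    simp [hq, and_assoc]
  rw [red1, red2, card_fiber heC hC hr hqS hqC (fun g => numCh g r = a ∧ lenF g r = b)
      (fun h => numCh h e + 1 = c),
    card_fiber heC hC hr hqS hqC (fun g => numCh g r = a ∧ numCh g q + 1 = b)
      (fun h => numCh h e + 1 = c)]
  congr 1
  exact IH (S \ C) Finset.sdiff_subset (fun h => (Finset.mem_sdiff.1 h).2 heC) q
    (Finset.mem_sdiff.2 ⟨hqS, hqC⟩) hq a b

/-- The symmetry to be proved, for trees with vertex set `S` with smallest vertex `r` and second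
smallest vertex `e`. -/
def Sym3 (S : Finset (Fin n)) : Prop :=
  ∀ r e, r ∈ S → e ∈ S → r < e → (∀ u ∈ S, u = r ∨ e ≤ u) → ∀ a b c,
    ((RT S r).filter fun f => numCh f r = a ∧ lenF f r = b ∧ numCh f e + 1 = c).card =
    ((RT S r).filter fun f => numCh f r = a ∧ lenF f r = c ∧ numCh f e + 1 = b).card

/-- Forgetting one coordinate in `Sym3`: jointly with the root degree, the length of the greedy
path has the law of the degree of any vertex `q` other than the root. -/
lemma Sym3.marginal {S : Finset (Fin n)} (hS : Sym3 S) {r q : Fin n} (hr : r ∈ S)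
    (hmin : ∀ u ∈ S, r ≤ u) (hq : q ∈ S) (hqr : q ≠ r) (a b : ℕ) :
    ((RT S r).filter fun f => numCh f r = a ∧ lenF f r = b).card =
    ((RT S r).filter fun f => numCh f r = a ∧ numCh f q + 1 = b).card := by
  have hne : (S.erase r).Nonempty := ⟨q, Finset.mem_erase.2 ⟨hqr, hq⟩⟩
  have hmem := Finset.min'_mem _ hne
  have hle := fun u hu => Finset.min'_le (S.erase r) u hu
  set e := (S.erase r).min' hne
  obtain ⟨her, heS⟩ := Finset.mem_erase.1 hmem
  rw [card_relabel hq hqr heS her]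
  have h3 := hS r e hr heS (lt_of_le_of_ne (hmin e heS) her.symm) (by
    intro u hu
    by_cases hur : u = r
    · exact Or.inl hur
    · exact Or.inr (hle u (Finset.mem_erase.2 ⟨hur, hu⟩))) a b
  rw [Finset.card_eq_sum_card_fiberwise (f := fun f => numCh f e + 1) (t := Finset.range (n + 2))
      (by intro f _; have := numCh_le f e; simp; omega),
    Finset.card_eq_sum_card_fiberwise (f := fun f => lenF f r) (t := Finset.range (n + 2))
      (by intro f _; have : lenF f r ≤ n := orbitLen_le _ r; simp; omega)]
  refine Finset.sum_congr rfl fun c _ => ?_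
  rw [Finset.filter_filter, Finset.filter_filter]
  refine Eq.trans ?_ ((h3 c).trans ?_)
  · congr 1; apply Finset.filter_congr; intro f _; tauto
  · congr 1; apply Finset.filter_congr; intro f _; tauto

/-- The length of the greedy path and the degree of its starting vertex are exchangeable. -/
lemma Sym3.len_root_symm {S : Finset (Fin n)} (hS : Sym3 S) {r : Fin n} (hr : r ∈ S)
    (hmin : ∀ u ∈ S, r ≤ u) (b c : ℕ) :
    ((RT S r).filter fun f => lenF f r = b ∧ numCh f r = c).card =
    ((RT S r).filter fun f => lenF f r = c ∧ numCh f r = b).card := by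
  by_cases hq : ∃ q ∈ S, q ≠ r
  · obtain ⟨q, hq, hqr⟩ := hq
    simp only [and_comm (a := lenF _ r = _)]
    rw [hS.marginal hr hmin hq hqr, hS.marginal hr hmin hq hqr, card_root_symm hq hqr]
  · push Not at hq
    have key : ∀ f ∈ RT S r, lenF f r = 0 ∧ numCh f r = 0 := by
      intro f hf
      rw [mem_RT] at hf
      have hno : ∀ u, u ≠ r → f u = u := fun u hu => hf.2.2.1 u (fun h => hu (hq u h))
      have hfix : nextF f r = r := by
        rcases nextF_cases f r with h | ⟨h1, h2⟩
        · exact h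
        · rw [hno _ h1.ne'] at h2; exact h2
      constructor
      · unfold lenF orbitLen
        simp [Function.iterate_fixed hfix, -Function.iterate_succ]
      · rw [numCh, Finset.card_eq_zero, Finset.filter_eq_empty_iff]
        rintro u _ ⟨h1, h2⟩
        rw [hno u h1] at h2; exact h1 h2
    congr 1
    apply Finset.filter_congr
    intro f hf
    rw [(key f hf).1, (key f hf).2]
    tauto

theorem sym3 (S : Finset (Fin n)) : Sym3 S := by
  induction S using Finset.strongInduction with
  | H S ih =>
  intro r e hr he hre hmin a b c
  have hmin' : ∀ u ∈ S, r ≤ u := by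
    intro u hu
    rcases hmin u hu with rfl | h
    · exact le_rfl
    · exact hre.le.trans h
  have hA := card_caseA he hre hmin (by
    intro C heC hC hrC
    refine (ih C ⟨hC, fun h => hrC (h hr)⟩).len_root_symm heC ?_
    intro u hu
    rcases hmin u (hC hu) with rfl | h
    · exact absurd hu hrC
    · exact h) a b c
  have hB := card_caseB he hre hmin (by
    intro R hR heR q hq hqr a b
    by_cases hrR : r ∈ R
    · exact (ih R ⟨hR, fun h => heR (h he)⟩).marginal hrR (fun u hu => hmin' u (hR hu)) hq hqr a b
    · have : RT R r = ∅ := by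
        rw [Finset.eq_empty_iff_forall_notMem]
        intro f hf; exact hrR (mem_RT.1 hf).1
      simp [this]) a
  have hBswap := (hB b c).trans ((card_parent_symm he hre.ne' a b c).trans (hB c b).symm)
  have split : ∀ b c,
      ((RT S r).filter fun f => numCh f r = a ∧ lenF f r = b ∧ numCh f e + 1 = c).card =
      ((RT S r).filter fun f => f e = r ∧ numCh f r = a ∧ lenF f r = b ∧ numCh f e + 1 = c).card +
      ((RT S r).filter fun f => f e ≠ r ∧ numCh f r = a ∧ lenF f r = b ∧
        numCh f e + 1 = c).card := by
    intro b c
    rw [← Finset.card_filter_add_card_filter_not (p := fun f => f e = r),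
      Finset.filter_filter, Finset.filter_filter]
    simp only [and_comm, ne_eq]
  rw [split, split, hA, hBswap]

/-! ### From parent functions to graphs -/

/-- The graph joining each vertex to its parent. -/
def treeOf (f : Fin n → Fin n) : SimpleGraph (Fin n) := SimpleGraph.fromRel fun u v => f u = v

lemma treeOf_adj {f : Fin n → Fin n} {u v : Fin n} :
    (treeOf f).Adj u v ↔ u ≠ v ∧ (f u = v ∨ f v = u) := by
  simp [treeOf]

lemma IsRT.treeOf_connected {r : Fin n} {f : Fin n → Fin n} (hf : IsRT Finset.univ r f) :
    (treeOf f).Connected := by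
  have key : ∀ u, (treeOf f).Reachable u r := by
    intro u
    obtain ⟨k, hk⟩ := hf.2.2.2.2 u (Finset.mem_univ u)
    induction k generalizing u with
    | zero => exact hk ▸ SimpleGraph.Reachable.refl _
    | succ k ih =>
      have h2 := ih (f u) (by rwa [Function.iterate_succ_apply] at hk)
      by_cases hu : u = f u
      · rwa [← hu] at h2
      · exact (treeOf_adj.2 ⟨hu, Or.inl rfl⟩ : (treeOf f).Adj u (f u)).reachable.trans h2
  have : Nonempty (Fin n) := ⟨r⟩
  exact ⟨fun u v => (key u).trans (key v).symm⟩

lemma IsRT.treeOf_isTree {r : Fin n} {f : Fin n → Fin n} (hf : IsRT Finset.univ r f) :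
    (treeOf f).IsTree := by
  classical
  rw [SimpleGraph.isTree_iff_connected_and_card]
  refine ⟨hf.treeOf_connected, le_antisymm ?_ hf.treeOf_connected.card_vert_le_card_edgeSet_add_one⟩
  have hsub : (treeOf f).edgeSet ⊆
      ((Finset.univ.erase r).image fun u => s(u, f u) : Finset (Sym2 (Fin n))) := by
    intro x
    induction x with
    | _ u v =>
    rw [SimpleGraph.mem_edgeSet, treeOf_adj]
    rintro ⟨hne, h | h⟩
    · rw [Finset.mem_coe, Finset.mem_image]
      refine ⟨u, ?_, by rw [h]⟩
      rw [Finset.mem_erase]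
      refine ⟨?_, Finset.mem_univ _⟩
      rintro rfl
      exact hne (hf.2.1.symm.trans h)
    · rw [Finset.mem_coe, Finset.mem_image]
      refine ⟨v, ?_, by rw [h, Sym2.eq_swap]⟩
      rw [Finset.mem_erase]
      refine ⟨?_, Finset.mem_univ _⟩
      rintro rfl
      exact hne (h.symm.trans hf.2.1)
  have h1 := Set.ncard_le_ncard hsub (Finset.finite_toSet _)
  rw [Set.ncard_coe_finset] at h1
  have h2 := h1.trans Finset.card_image_le
  rw [Finset.card_erase_of_mem (Finset.mem_univ r), Finset.card_univ, Fintype.card_fin] at h2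
  have h3 : 0 < n := r.pos
  rw [Nat.card_coe_set_eq, Nat.card_eq_fintype_card, Fintype.card_fin]
  omega

/-- Both parent functions orient the same edges; by induction on the depth of `u`, they orient the
edge from `u` to its parent in the same way. -/
lemma treeOf_injOn {r : Fin n} {f g : Fin n → Fin n} (hf : IsRT Finset.univ r f)
    (hg : IsRT Finset.univ r g) (h : treeOf f = treeOf g) : f = g := by
  funext u
  obtain ⟨k, hk⟩ := hf.2.2.2.2 u (Finset.mem_univ u)
  induction k generalizing u with
  | zero =>
    obtain rfl : u = r := hk
    rw [hf.2.1, hg.2.1]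
  | succ k ih =>
    by_cases hur : u = r
    · rw [hur, hf.2.1, hg.2.1]
    have hI := ih (f u) (by rwa [Function.iterate_succ_apply] at hk)
    have hne : u ≠ f u := fun hh => hur (hf.periodic (Finset.mem_univ u) (k := 1) one_pos hh.symm)
    have hadj : (treeOf g).Adj u (f u) := h ▸ treeOf_adj.2 ⟨hne, Or.inl rfl⟩
    rcases (treeOf_adj.1 hadj).2 with h1 | h1
    · exact h1.symm
    · exact absurd (hf.periodic (Finset.mem_univ u) (k := 2) two_pos (hI.trans h1)) hur

/-- Every tree has a parent function: the parent is a neighbour closer to the root `r`. -/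
lemma treeOf_surj (r : Fin n) {t : SimpleGraph (Fin n)} (ht : t.IsTree) :
    ∃ f, IsRT Finset.univ r f ∧ treeOf f = t := by
  classical
  have ex : ∀ u, ∃ v, (u = r → v = r) ∧ (u ≠ r → t.Adj u v ∧ t.dist v r + 1 = t.dist u r) := by
    intro u
    by_cases hu : u = r
    · exact ⟨r, fun _ => rfl, fun h => absurd hu h⟩
    obtain ⟨p, hp⟩ := ht.1.exists_walk_length_eq_dist u r
    cases p with
    | nil => exact absurd rfl hu
    | @cons _ v _ hadj p =>
      refine ⟨v, fun h => absurd h hu, fun _ => ⟨hadj, ?_⟩⟩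
      have h1 := SimpleGraph.dist_le p
      have h2 := ht.1.dist_triangle (u := u) (v := v) (w := r)
      rw [SimpleGraph.dist_eq_one_iff_adj.2 hadj] at h2
      rw [SimpleGraph.Walk.length_cons] at hp
      omega
  choose f hfr hf using ex
  have hRT : IsRT Finset.univ r f := by
    refine ⟨Finset.mem_univ _, hfr r rfl, fun u hu => absurd (Finset.mem_univ u) hu,
      fun _ _ => Finset.mem_univ _, ?_⟩
    rintro u -
    generalize hd : t.dist u r = d
    induction d generalizing u with
    | zero => exact ⟨0, (ht.1.dist_eq_zero_iff.1 hd)⟩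
    | succ d ih =>
      have hur : u ≠ r := by rintro rfl; simp at hd
      obtain ⟨k, hk⟩ := ih (f u) (by have := (hf u hur).2; omega)
      exact ⟨k + 1, by rwa [Function.iterate_succ_apply]⟩
  refine ⟨f, hRT, ?_⟩
  have hle : treeOf f ≤ t := by
    intro u v h
    obtain ⟨hne, h | h⟩ := treeOf_adj.1 h
    · have hur : u ≠ r := by rintro rfl; exact hne ((hfr u rfl).symm.trans h)
      exact h ▸ (hf u hur).1
    · have hvr : v ≠ r := by rintro rfl; exact hne (h.symm.trans (hfr v rfl))
      exact (h ▸ (hf v hvr).1).symm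
  have hmin := (SimpleGraph.isTree_iff_minimal_connected).1 ht
  exact le_antisymm hle (hmin.2 hRT.treeOf_connected hle)

lemma ncard_neighborSet_root {r : Fin n} {f : Fin n → Fin n} (hf : IsRT Finset.univ r f) :
    ((treeOf f).neighborSet r).ncard = numCh f r := by
  rw [numCh, ← Set.ncard_coe_finset]
  congr 1
  ext u
  simp only [SimpleGraph.mem_neighborSet, treeOf_adj, hf.2.1, Finset.coe_filter, Finset.mem_univ,
    true_and, Set.mem_ofPred_eq]
  constructor
  · rintro ⟨h, h' | h'⟩
    · exact absurd h' h
    · exact ⟨h.symm, h'⟩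
  · rintro ⟨h, h'⟩; exact ⟨h.symm, Or.inr h'⟩

lemma ncard_neighborSet_ne {r e : Fin n} {f : Fin n → Fin n} (hf : IsRT Finset.univ r f)
    (her : e ≠ r) : ((treeOf f).neighborSet e).ncard = numCh f e + 1 := by
  classical
  have h2 : f (f e) ≠ e := fun h => her (hf.periodic (Finset.mem_univ e) (k := 2) two_pos h)
  have h1 : f e ≠ e := fun h => her (hf.periodic (Finset.mem_univ e) (k := 1) one_pos h)
  rw [numCh, ← Finset.card_insert_of_notMem (a := f e) (by simp [h2]), ← Set.ncard_coe_finset]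
  congr 1
  ext u
  simp only [SimpleGraph.mem_neighborSet, treeOf_adj, Finset.coe_insert, Finset.coe_filter,
    Finset.mem_univ, true_and, Set.mem_insert_iff, Set.mem_ofPred_eq]
  constructor
  · rintro ⟨h, h' | h'⟩
    · exact Or.inl h'.symm
    · exact Or.inr ⟨h.symm, h'⟩
  · rintro (rfl | ⟨hne, hfu⟩)
    · exact ⟨h1.symm, Or.inl rfl⟩
    · exact ⟨hne.symm, Or.inr hfu⟩

/-- The hypothesis holds along the greedy path; it says that the parent of `v` is not a candidate. -/
lemma greedyNext_treeOf {f : Fin n → Fin n} {v : Fin n} (hv : f v ≤ v) :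
    greedyNext (treeOf f) v = nextF f v := by
  classical
  have : (Finset.univ.filter fun w => (treeOf f).Adj v w ∧ v < w) =
      (Finset.univ.filter fun w => v < w ∧ f w = v) := by
    apply Finset.filter_congr
    intro w _
    rw [treeOf_adj]
    constructor
    · rintro ⟨⟨_, h | h⟩, hlt⟩
      · exact absurd (h ▸ hv) hlt.not_ge
      · exact ⟨hlt, h⟩
    · rintro ⟨hlt, h⟩; exact ⟨⟨hlt.ne, Or.inr h⟩, hlt⟩
  unfold greedyNext nextF
  simp only [this]

lemma greedyLenFrom_treeOf {r : Fin n} {f : Fin n → Fin n} (hf : IsRT Finset.univ r f) :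
    greedyLenFrom (treeOf f) r = lenF f r := by
  have h1 : greedyLenFrom (treeOf f) r = orbitLen (greedyNext (treeOf f)) r := by
    unfold greedyLenFrom orbitLen
    congr!
  rw [h1]
  refine (orbitLen_congr (fun u => f u ≤ u) hf.2.1.le ?_ ?_).symm
  · intro u hu
    rcases nextF_cases f u with h | ⟨h1, h2⟩
    · rwa [h]
    · rw [h2]; exact h1.le
  · intro u hu; exact (greedyNext_treeOf hu).symm

lemma card_trees (r : Fin n) (P : SimpleGraph (Fin n) → Prop) (Q : (Fin n → Fin n) → Prop)
    [DecidablePred Q] (h : ∀ f, IsRT Finset.univ r f → (P (treeOf f) ↔ Q f)) :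
    Nat.card {t : SimpleGraph (Fin n) // t.IsTree ∧ P t} =
      ((RT Finset.univ r).filter Q).card := by
  rw [← Nat.card_eq_finsetCard]
  have hmem : ∀ f ∈ (RT Finset.univ r).filter Q, (treeOf f).IsTree ∧ P (treeOf f) := by
    intro f hf
    obtain ⟨h1, h2⟩ := Finset.mem_filter.1 hf
    exact ⟨(mem_RT.1 h1).treeOf_isTree, (h _ (mem_RT.1 h1)).2 h2⟩
  refine (Nat.card_eq_of_bijective (fun f : ((RT Finset.univ r).filter Q : Finset _) =>
    (⟨treeOf f.1, hmem f.1 f.2⟩ : {t : SimpleGraph (Fin n) // t.IsTree ∧ P t})) ⟨?_, ?_⟩).symm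
  · rintro ⟨f, hf⟩ ⟨g, hg⟩ hfg
    exact Subtype.ext (treeOf_injOn (mem_RT.1 (Finset.mem_filter.1 hf).1)
      (mem_RT.1 (Finset.mem_filter.1 hg).1) (congrArg Subtype.val hfg))
  · rintro ⟨t, ht, hP⟩
    obtain ⟨f, hf, rfl⟩ := treeOf_surj r ht
    exact ⟨⟨f, Finset.mem_filter.2 ⟨mem_RT.2 hf, (h f hf).1 hP⟩⟩, rfl⟩

end

/-- Corollary 3.2 (Caraceni's conjecture): `(deg_1, |L_1|, deg_2)` and
`(deg_1, deg_2, |L_1|)` have the same law on uniform Cayley trees. -/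
theorem stmt_6 (n : ℕ) (hn : 2 ≤ n) (a b c : ℕ) :
    Nat.card {t : SimpleGraph (Fin n) //
        t.IsTree ∧ deg1 t = a ∧ L1len t = b ∧ deg2 t = c} =
    Nat.card {t : SimpleGraph (Fin n) //
        t.IsTree ∧ deg1 t = a ∧ deg2 t = b ∧ L1len t = c} := by
  have h0 : 0 < n := by omega
  have h1 : 1 < n := by omega
  have her : (⟨1, h1⟩ : Fin n) ≠ ⟨0, h0⟩ := by simp
  rw [card_trees ⟨0, h0⟩ (fun t => deg1 t = a ∧ L1len t = b ∧ deg2 t = c)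
      (fun f => numCh f ⟨0, h0⟩ = a ∧ lenF f ⟨0, h0⟩ = b ∧ numCh f ⟨1, h1⟩ + 1 = c),
    card_trees ⟨0, h0⟩ (fun t => deg1 t = a ∧ deg2 t = b ∧ L1len t = c)
      (fun f => numCh f ⟨0, h0⟩ = a ∧ lenF f ⟨0, h0⟩ = c ∧ numCh f ⟨1, h1⟩ + 1 = b)]
  · refine sym3 Finset.univ ⟨0, h0⟩ ⟨1, h1⟩ (Finset.mem_univ _) (Finset.mem_univ _)
      (by simp [Fin.lt_def]) ?_ a b c
    intro u _
    simp only [Fin.ext_iff, Fin.le_def]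
    omega
  · intro f hf
    rw [deg1, dif_pos h0, deg2, dif_pos h1, L1len, dif_pos h0, ncard_neighborSet_root hf,
      ncard_neighborSet_ne hf her, greedyLenFrom_treeOf hf]
    tauto
  · intro f hf
    rw [deg1, dif_pos h0, deg2, dif_pos h1, L1len, dif_pos h0, ncard_neighborSet_root hf,
      ncard_neighborSet_ne hf her, greedyLenFrom_treeOf hf]
end

section
/- For every integer n ≥ 2 and all integers a, b, c ≥ 0, the number of Cayley trees t on {1, …, n} with deg_1(t) = a, deg'_2(t) = b and |L_1(t)| = c equals the number of Cayley trees t on {1, …, n} with deg_1(t) = b, deg'_2(t) = a and |L_1(t)| = c. (Equivalently, G_n(x,y,z) = G_n(y,x,z) for all n ≥ 2.) -/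
/-- `v 0, …, v M` is the greedy increasing path of `t` from the vertex `0`. The extra value
`v (M + 1) = 0` closes the sequence up cyclically. -/
structure IsGreedy {n : ℕ} (t : SimpleGraph (Fin (n + 1))) (M : ℕ) (v : ℕ → Fin (n + 1)) :
    Prop where
  zero : v 0 = 0
  wrap : v (M + 1) = 0
  mono : ∀ i < M, v i < v (i + 1)
  adj : ∀ i < M, t.Adj (v i) (v (i + 1))
  gap : ∀ i < M, ∀ w, t.Adj (v i) w → v i < w → v (i + 1) ≤ w
  last : ∀ w, t.Adj (v M) w → ¬ v M < w

/-! ### The greedy path -/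

theorem greedyNext_eq {m : ℕ} {t : SimpleGraph (Fin m)} {x y : Fin m} (ha : t.Adj x y)
    (hl : x < y) (hm : ∀ w, t.Adj x w → x < w → y ≤ w) : greedyNext t x = y := by
  unfold greedyNext
  rw [dif_pos ⟨y, by simp [ha, hl]⟩]
  apply le_antisymm
  · exact Finset.min'_le _ _ (by simp [ha, hl])
  · apply Finset.le_min'
    intro w hw
    simp only [Finset.mem_filter, Finset.mem_univ, true_and] at hw
    exact hm w hw.1 hw.2

theorem greedyNext_self {m : ℕ} {t : SimpleGraph (Fin m)} {x : Fin m}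
    (hm : ∀ w, t.Adj x w → ¬ x < w) : greedyNext t x = x := by
  unfold greedyNext
  rw [dif_neg]
  rintro ⟨w, hw⟩
  simp only [Finset.mem_filter, Finset.mem_univ, true_and] at hw
  exact hm w hw.1 hw.2

theorem greedyNext_spec {m : ℕ} (t : SimpleGraph (Fin m)) (x : Fin m) :
    (greedyNext t x = x ∧ ∀ w, t.Adj x w → ¬ x < w) ∨
    (x < greedyNext t x ∧ t.Adj x (greedyNext t x) ∧
      ∀ w, t.Adj x w → x < w → greedyNext t x ≤ w) := by
  classical
  by_cases h : ∀ w, t.Adj x w → ¬ x < w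
  · exact Or.inl ⟨greedyNext_self h, h⟩
  · right
    push Not at h
    obtain ⟨w, hw⟩ := h
    have hne : (Finset.univ.filter fun w => t.Adj x w ∧ x < w).Nonempty := ⟨w, by simp [hw]⟩
    have hmem := Finset.min'_mem _ hne
    have hle : ∀ w' ∈ Finset.univ.filter fun w => t.Adj x w ∧ x < w,
        Finset.min' _ hne ≤ w' := fun w' h' => Finset.min'_le _ w' h'
    generalize Finset.min' _ hne = y at hmem hle
    simp only [Finset.mem_filter, Finset.mem_univ, true_and] at hmem hle
    rw [greedyNext_eq hmem.1 hmem.2 fun w' h1 h2 => hle w' ⟨h1, h2⟩]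
    exact ⟨hmem.2, hmem.1, fun w' h1 h2 => hle w' ⟨h1, h2⟩⟩

theorem exists_isGreedy {n : ℕ} (t : SimpleGraph (Fin (n + 1))) : ∃ M v, IsGreedy t M v := by
  classical
  set g : ℕ → Fin (n + 1) := fun i => (greedyNext t)^[i] 0 with hg
  have hs : ∀ i, g (i + 1) = greedyNext t (g i) := fun i => Function.iterate_succ_apply' _ _ _
  have hex : ∃ k, g (k + 1) = g k := by
    by_contra! hne
    have hlt : ∀ i, g i < g (i + 1) := by
      intro i
      rcases greedyNext_spec t (g i) with h | h
      · exact absurd ((hs i).trans h.1) (hne i)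
      · rw [hs]; exact h.1
    have hi : ∀ i, i ≤ (g i).val := by
      intro i
      induction i with
      | zero => simp
      | succ i ih => have := hlt i; rw [Fin.lt_def] at this; omega
    have := hi (n + 1)
    have := (g (n + 1)).isLt
    omega
  have hM := Nat.find_spec hex
  have hmin := fun k (hk : k < Nat.find hex) => Nat.find_min hex hk
  generalize Nat.find hex = M at hM hmin
  have hstep : ∀ i < M, g i < g (i + 1) ∧ t.Adj (g i) (g (i + 1)) ∧
      ∀ w, t.Adj (g i) w → g i < w → g (i + 1) ≤ w := by
    intro i hi
    rcases greedyNext_spec t (g i) with h | h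
    · exact absurd ((hs i).trans h.1) (hmin i hi)
    · rw [hs]; exact h
  refine ⟨M, fun i => if i ≤ M then g i else 0, ?_, ?_, ?_, ?_, ?_, ?_⟩
  · simp [hg]
  · simp
  · intro i hi
    simpa [hi.le, Nat.succ_le_of_lt hi] using (hstep i hi).1
  · intro i hi
    simpa [hi.le, Nat.succ_le_of_lt hi] using (hstep i hi).2.1
  · intro i hi
    simpa [hi.le, Nat.succ_le_of_lt hi] using (hstep i hi).2.2
  · rcases greedyNext_spec t (g M) with h | h
    · simpa using h.2
    · rw [← hs, hM] at h
      exact absurd h.1 (lt_irrefl _)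

namespace IsGreedy

variable {n : ℕ} {t : SimpleGraph (Fin (n + 1))} {M : ℕ} {v : ℕ → Fin (n + 1)}

theorem iter_le (h : IsGreedy t M v) : ∀ k ≤ M, (greedyNext t)^[k] 0 = v k := by
  intro k
  induction k with
  | zero => intro _; simp [h.zero]
  | succ k ih =>
    intro hk
    rw [Function.iterate_succ_apply', ih (by omega)]
    exact greedyNext_eq (h.adj k (by omega)) (h.mono k (by omega)) (h.gap k (by omega))

theorem iter_ge (h : IsGreedy t M v) (k : ℕ) (hk : M ≤ k) : (greedyNext t)^[k] 0 = v M := by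
  induction k, hk using Nat.le_induction with
  | base => exact h.iter_le M le_rfl
  | succ k _ ih =>
    rw [Function.iterate_succ_apply', ih]
    exact greedyNext_self h.last

theorem lt_of_lt (h : IsGreedy t M v) {i j : ℕ} (hij : i < j) (hj : j ≤ M) : v i < v j := by
  induction j, hij using Nat.le_induction with
  | base => exact h.mono i (by omega)
  | succ k hk ih => exact (ih (by omega)).trans (h.mono k (by omega))

theorem inj (h : IsGreedy t M v) {i j : ℕ} (hi : i ≤ M) (hj : j ≤ M) (hv : v i = v j) :
    i = j := by
  rcases lt_trichotomy i j with hl | hl | hl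
  · exact absurd hv (h.lt_of_lt hl hj).ne
  · exact hl
  · exact absurd hv (h.lt_of_lt hl hi).ne'

theorem le_n (h : IsGreedy t M v) : M ≤ n := by
  have hi : ∀ i ≤ M, i ≤ (v i).val := by
    intro i
    induction i with
    | zero => simp
    | succ i ih =>
      intro hi
      have := h.mono i hi
      rw [Fin.lt_def] at this
      have := ih (by omega)
      omega
  have := hi M le_rfl
  have := (v M).isLt
  omega

theorem greedyLast_eq (h : IsGreedy t M v) : greedyLast t 0 = v M :=
  h.iter_ge _ (by have := h.le_n; omega)

theorem greedyLenFrom_eq (h : IsGreedy t M v) : greedyLenFrom t 0 = M := by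
  classical
  have hn := h.le_n
  unfold greedyLenFrom
  trans (Finset.range M).card
  · congr 1
    ext k
    simp only [Finset.mem_filter, Finset.mem_range]
    constructor
    · rintro ⟨_, hk⟩
      by_contra hM
      exact hk ((h.iter_ge _ (by omega)).trans (h.iter_ge _ (by omega)).symm)
    · intro hk
      refine ⟨by omega, ?_⟩
      rw [h.iter_le _ hk, h.iter_le _ hk.le]
      exact (h.mono k hk).ne'
  · simp

theorem unique {M' : ℕ} {v' : ℕ → Fin (n + 1)} (h : IsGreedy t M v) (h' : IsGreedy t M' v') :
    M' = M ∧ ∀ i ≤ M + 1, v' i = v i := by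
  have hM : M' = M := h'.greedyLenFrom_eq.symm.trans h.greedyLenFrom_eq
  subst hM
  refine ⟨rfl, fun i hi => ?_⟩
  rcases Nat.lt_or_ge M' i with hl | hl
  · obtain rfl : i = M' + 1 := by omega
    rw [h.wrap, h'.wrap]
  · rw [← h.iter_le i hl, ← h'.iter_le i hl]

end IsGreedy

/-! ### The reflection -/

open Classical in
/-- The relabelling attached to a greedy path `v 0, …, v M`, as a map from new labels to old ones:
the new label `-v (i + 1)` stands for `v i`, and `-x` stands for `x` off the path. -/
noncomputable def relabel {n : ℕ} (M : ℕ) (v : ℕ → Fin (n + 1)) (x : Fin (n + 1)) : Fin (n + 1) :=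
  if h : ∃ i ≤ M, -v (i + 1) = x then v h.choose else -x

namespace IsGreedy

variable {n : ℕ} {t : SimpleGraph (Fin (n + 1))} {M : ℕ} {v : ℕ → Fin (n + 1)}

theorem inj_succ (h : IsGreedy t M v) {i j : ℕ} (hi : i ≤ M) (hj : j ≤ M)
    (hv : v (i + 1) = v (j + 1)) : i = j := by
  have key : ∀ k < M, v (k + 1) ≠ v (M + 1) := by
    intro k hk he
    rw [h.wrap, ← h.zero] at he
    have := h.inj hk (Nat.zero_le _) he
    omega
  rcases hi.lt_or_eq with hi | rfl <;> rcases hj.lt_or_eq with hj | rfl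
  · have := h.inj hi hj hv
    omega
  · exact absurd hv (key i hi)
  · exact absurd hv.symm (key j hj)
  · rfl

theorem relabel_path (h : IsGreedy t M v) {i : ℕ} (hi : i ≤ M) :
    relabel M v (-v (i + 1)) = v i := by
  have hex : ∃ j ≤ M, -v (j + 1) = -v (i + 1) := ⟨i, hi, rfl⟩
  unfold relabel
  rw [dif_pos hex]
  congr 1
  exact h.inj_succ hex.choose_spec.1 hi (neg_injective hex.choose_spec.2)

theorem relabel_off {x : Fin (n + 1)} (hx : ∀ i ≤ M, -v (i + 1) ≠ x) :
    relabel M v x = -x := by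
  unfold relabel
  rw [dif_neg]
  rintro ⟨i, hi, he⟩
  exact hx i hi he

theorem neg_val (x : Fin (n + 1)) :
    (x.val = 0 ∧ (-x).val = 0) ∨ (0 < x.val ∧ (-x).val = n + 1 - x.val) := by
  have hx := x.isLt
  rw [Fin.val_neg']
  rcases Nat.eq_zero_or_pos x.val with h0 | h0
  · left; simp [h0]
  · right; exact ⟨h0, Nat.mod_eq_of_lt (by omega)⟩

/-- The relabelled graph has the reversed image of the old greedy path as its greedy path. -/
theorem reflect (h : IsGreedy t M v) :
    IsGreedy (t.comap (relabel M v)) M (fun j => -v (M + 1 - j)) := by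
  have hrel : ∀ i ≤ M, relabel M v (-v (M + 1 - i)) = v (M - i) := by
    intro i hi
    rw [show M + 1 - i = (M - i) + 1 by omega]
    exact h.relabel_path (by omega)
  have hpos : ∀ i, 0 < i → i ≤ M → 0 < (v i).val := by
    intro i h0 hi
    have := h.lt_of_lt h0 hi
    rw [h.zero, Fin.lt_def] at this
    simpa using this
  have hmono : ∀ i < M, -v (M + 1 - i) < -v (M + 1 - (i + 1)) := by
    intro i hi
    rw [Fin.lt_def]
    have h2 := hpos (M + 1 - (i + 1)) (by omega) (by omega)
    have h4 := (v (M + 1 - (i + 1))).isLt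
    rcases Nat.eq_zero_or_pos i with rfl | h0
    · simp only [Nat.sub_zero, h.wrap, neg_zero, Fin.val_zero]
      rcases neg_val (v (M + 1 - (0 + 1))) with a | a <;> omega
    · have h1 := hpos (M + 1 - i) (by omega) (by omega)
      have h3 := h.lt_of_lt (i := M + 1 - (i + 1)) (j := M + 1 - i) (by omega) (by omega)
      rw [Fin.lt_def] at h3
      rcases neg_val (v (M + 1 - (i + 1))) with a | a <;>
        rcases neg_val (v (M + 1 - i)) with b | b <;> omega
  have hmono' : ∀ i j, i < j → j ≤ M → -v (M + 1 - i) < -v (M + 1 - j) := by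
    intro i j hij hj
    induction j, hij using Nat.le_induction with
    | base => exact hmono i (by omega)
    | succ k hk ih => exact (ih (by omega)).trans (hmono k (by omega))
  -- A new neighbour off the path is the negative of an old neighbour of `v (M - i)`.
  have hoff : ∀ i ≤ M, ∀ w, (t.comap (relabel M v)).Adj (-v (M + 1 - i)) w →
      (∃ j ≤ M, w = -v (M + 1 - j)) ∨ (t.Adj (v (M - i)) (-w) ∧ ∀ j ≤ M + 1, v j ≠ -w) := by
    intro i hi w hw
    rw [SimpleGraph.comap_adj, hrel i hi] at hw
    by_cases hp : ∀ j ≤ M, -v (j + 1) ≠ w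
    · right
      rw [relabel_off hp] at hw
      refine ⟨hw, fun j hj he => ?_⟩
      rcases Nat.eq_zero_or_pos j with rfl | h0
      · refine hp M le_rfl ?_
        rw [h.wrap, ← h.zero, he, neg_neg]
      · refine hp (j - 1) (by omega) ?_
        rw [show j - 1 + 1 = j by omega, he, neg_neg]
    · left
      push Not at hp
      obtain ⟨j, hj, he⟩ := hp
      exact ⟨M - j, by omega, by rw [show M + 1 - (M - j) = j + 1 by omega, he]⟩
  refine ⟨?_, ?_, hmono, ?_, ?_, ?_⟩
  · simp [h.wrap]
  · simp [h.zero]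
  · intro i hi
    rw [SimpleGraph.comap_adj, hrel i hi.le, hrel (i + 1) hi]
    have := h.adj (M - (i + 1)) (by omega)
    rw [show M - (i + 1) + 1 = M - i by omega] at this
    exact this.symm
  · intro i hi w hw hlt
    rcases hoff i hi.le w hw with ⟨j, hj, rfl⟩ | ⟨ha, hne⟩
    · rcases lt_trichotomy j (i + 1) with hl | rfl | hl
      · exfalso
        rcases (show j < i ∨ j = i by omega) with hl | rfl
        · exact absurd hlt (hmono' j i hl hi.le).not_gt
        · exact lt_irrefl _ hlt
      · exact le_rfl
      · exact (hmono' _ _ hl hj).le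
    · by_contra hlt2
      rw [not_le] at hlt2
      have h2 := hpos (M + 1 - (i + 1)) (by omega) (by omega)
      rw [Fin.lt_def] at hlt hlt2
      have hw' := neg_val w
      have hidx : M + 1 - (i + 1) = M - i := by omega
      simp only [hidx] at h2 hlt2
      have hb := neg_val (v (M - i))
      have hwl := w.isLt
      have hvl := (v (M - i)).isLt
      have hgt : v (M - i) < -w := by rw [Fin.lt_def]; omega
      rcases Nat.eq_zero_or_pos i with rfl | h0
      · exact h.last _ ha hgt
      · have hg := h.gap (M - i) (by omega) _ ha hgt
        rw [show M - i + 1 = M + 1 - i by omega, Fin.le_def] at hg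
        have hp := hpos (M + 1 - i) (by omega) (by omega)
        have hc := neg_val (v (M + 1 - i))
        omega
  · intro w hw hlt
    rcases hoff M le_rfl w hw with ⟨j, hj, rfl⟩ | ⟨ha, hne⟩
    · rcases hj.lt_or_eq with hl | rfl
      · exact absurd hlt (hmono' j M hl le_rfl).not_gt
      · exact lt_irrefl _ hlt
    · rw [Nat.sub_self] at ha
      rw [show M + 1 - M = 1 by omega] at hlt
      have h0 := hne 0 (by omega)
      rw [h.zero] at h0 ha
      have hwp : (0 : Fin (n + 1)) < -w := Fin.pos_iff_ne_zero.mpr h0.symm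
      rw [Fin.lt_def] at hlt
      have hw' := neg_val w
      have hwl := w.isLt
      rcases Nat.eq_zero_or_pos M with rfl | hM
      · have := h.last (-w)
        rw [h.zero] at this
        exact this ha hwp
      · have hg := h.gap 0 hM (-w)
        rw [h.zero] at hg
        have hg := hg ha hwp
        rw [zero_add, Fin.le_def] at hg
        have hp := hpos 1 (by omega) hM
        have hc := neg_val (v 1)
        have : 0 < (-w).val := hwp
        omega

theorem relabel_relabel (h : IsGreedy t M v) {M' : ℕ} {v' : ℕ → Fin (n + 1)}
    (h' : IsGreedy (t.comap (relabel M v)) M' v') (x : Fin (n + 1)) :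
    relabel M v (relabel M' v' x) = x := by
  obtain ⟨rfl, hv⟩ := h.reflect.unique h'
  by_cases hp : ∀ j ≤ M', -v' (j + 1) ≠ x
  · rw [relabel_off hp, relabel_off, neg_neg]
    intro i hi he
    have he := neg_injective he
    rcases hi.lt_or_eq with hl | rfl
    · refine hp (M' - (i + 1)) (by omega) ?_
      rw [hv _ (by omega), neg_neg, ← he]
      congr 1
      omega
    · refine hp i le_rfl ?_
      rw [hv _ le_rfl, neg_neg, ← he, Nat.sub_self, h.zero, h.wrap]
  · push Not at hp
    obtain ⟨j, hj, rfl⟩ := hp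
    rw [h'.relabel_path hj, hv j (by omega), hv (j + 1) (by omega), neg_neg,
      show M' + 1 - j = (M' - j) + 1 by omega, h.relabel_path (by omega)]
    congr 1
    omega

theorem relabel_bijective (h : IsGreedy t M v) : Function.Bijective (relabel M v) := by
  have hs : Function.Surjective (relabel M v) :=
    fun x => ⟨_, h.relabel_relabel h.reflect x⟩
  exact ⟨Finite.injective_iff_surjective.mpr hs, hs⟩

end IsGreedy

/-! ### The involution on graphs -/

/-- The number of edges of the greedy path of `t`. -/
noncomputable def pathLen {n : ℕ} (t : SimpleGraph (Fin (n + 1))) : ℕ :=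
  (exists_isGreedy t).choose

/-- The greedy path of `t`, closed up by the value `0`; junk beyond index `pathLen t + 1`. -/
noncomputable def pathSeq {n : ℕ} (t : SimpleGraph (Fin (n + 1))) : ℕ → Fin (n + 1) :=
  (exists_isGreedy t).choose_spec.choose

theorem isGreedy_path {n : ℕ} (t : SimpleGraph (Fin (n + 1))) :
    IsGreedy t (pathLen t) (pathSeq t) :=
  (exists_isGreedy t).choose_spec.choose_spec

/-- The graph obtained from `t` by relabelling along its greedy path. -/
noncomputable def pathFlip {n : ℕ} (t : SimpleGraph (Fin (n + 1))) : SimpleGraph (Fin (n + 1)) :=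
  t.comap (relabel (pathLen t) (pathSeq t))

theorem pathFlip_pathFlip {n : ℕ} (t : SimpleGraph (Fin (n + 1))) :
    pathFlip (pathFlip t) = t := by
  have key := (isGreedy_path t).relabel_relabel (isGreedy_path (pathFlip t))
  ext x y
  change t.Adj (relabel _ _ (relabel _ _ x)) (relabel _ _ (relabel _ _ y)) ↔ _
  rw [key, key]

/-- The relabelling is an isomorphism from the flipped graph to the original one. -/
noncomputable def pathFlipIso {n : ℕ} (t : SimpleGraph (Fin (n + 1))) : pathFlip t ≃g t :=
  SimpleGraph.Iso.comap (Equiv.ofBijective _ (isGreedy_path t).relabel_bijective) t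

theorem ncard_flip {n : ℕ} (t : SimpleGraph (Fin (n + 1))) (x : Fin (n + 1)) :
    ((pathFlip t).neighborSet x).ncard =
      (t.neighborSet (relabel (pathLen t) (pathSeq t) x)).ncard :=
  Nat.card_congr ((pathFlipIso t).mapNeighborSet x)

theorem deg1_eq {n : ℕ} (t : SimpleGraph (Fin (n + 1))) : deg1 t = (t.neighborSet 0).ncard := by
  unfold deg1
  rw [dif_pos n.succ_pos]
  rfl

theorem deg2'_eq {n : ℕ} {t : SimpleGraph (Fin (n + 1))} {M : ℕ} {v : ℕ → Fin (n + 1)}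
    (h : IsGreedy t M v) : deg2' t = (t.neighborSet (v M)).ncard := by
  unfold deg2'
  rw [dif_pos n.succ_pos, ← h.greedyLast_eq]
  rfl

theorem L1len_eq {n : ℕ} {t : SimpleGraph (Fin (n + 1))} {M : ℕ} {v : ℕ → Fin (n + 1)}
    (h : IsGreedy t M v) : L1len t = M := by
  unfold L1len
  rw [dif_pos n.succ_pos]
  exact h.greedyLenFrom_eq

theorem L1len_flip {n : ℕ} (t : SimpleGraph (Fin (n + 1))) : L1len (pathFlip t) = L1len t := by
  rw [L1len_eq (isGreedy_path t)]
  exact L1len_eq (isGreedy_path t).reflect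

theorem deg1_flip {n : ℕ} (t : SimpleGraph (Fin (n + 1))) : deg1 (pathFlip t) = deg2' t := by
  have h := isGreedy_path t
  rw [deg1_eq, deg2'_eq h, ncard_flip, ← h.relabel_path le_rfl, h.wrap, neg_zero]

theorem deg2'_flip {n : ℕ} (t : SimpleGraph (Fin (n + 1))) : deg2' (pathFlip t) = deg1 t := by
  rw [← deg1_flip, pathFlip_pathFlip]

/-- Proposition 4.1: `G_n(x,y,z) = G_n(y,x,z)`, stated as an equality of counts of
Cayley trees: the pairs `(deg_1, deg'_2)` and `(deg'_2, deg_1)` are exchangeable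
jointly with `|L_1|`. -/
theorem stmt_13 (n : ℕ) (hn : 2 ≤ n) (a b c : ℕ) :
    Nat.card {t : SimpleGraph (Fin n) //
        t.IsTree ∧ deg1 t = a ∧ deg2' t = b ∧ L1len t = c} =
    Nat.card {t : SimpleGraph (Fin n) //
        t.IsTree ∧ deg1 t = b ∧ deg2' t = a ∧ L1len t = c} := by
  obtain ⟨n, rfl⟩ : ∃ k, n = k + 1 := ⟨n - 1, by omega⟩
  have hinv : Function.Involutive (pathFlip (n := n)) := pathFlip_pathFlip
  refine Nat.card_congr (Equiv.subtypeEquiv hinv.toPerm fun t => ?_)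
  simp only [Function.Involutive.coe_toPerm, deg1_flip, deg2'_flip, L1len_flip,
    (pathFlipIso t).isTree_iff]
  tauto
end
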